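/- arXiv:2309.16350 — 2 statements merged into one kernel-verified Lean document; each statement's English description precedes it below -/
import Mathlib

section
/- Existence of the position derivative as a commutator: let α > 1+ϑ and u∈C^α. Then for every i=1,…,d and every z=(t,x,v)∈ℝ×ℝ^{2d}, the limit of the difference quotient (u(t, x+δe_i, v) − u(t,x,v))/δ as δ→0 exists and equals [Z_i,Y]u(z) := Z_i(Yu)(z) − Y(Z_i u)(z); in other words ∂_{x_i}u exists everywhere and ∂_{x_i}u = [Z_i,Y]u. Moreover ∂_{x_i}u ∈ C^{α−(ϑ+1)}. -/
noncomputable section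
open scoped BigOperators ENNReal

/-- Points of the Galilean group `ℝ × ℝ^d × ℝ^d`, written `z = (t, x, v)`. -/
abbrev Pt (d : ℕ) := ℝ × EuclideanSpace ℝ (Fin d) × EuclideanSpace ℝ (Fin d)

variable {d : ℕ}

/-- Flow of the drift field `Y = ⟨v, ∇ₓ⟩ + ∂ₜ`. -/
def flowY (τ : ℝ) (z : Pt d) : Pt d := (z.1 + τ, z.2.1 + τ • z.2.2, z.2.2)

/-- Flow of the field `Z_h = ⟨h, ∇_v⟩`. -/
def flowZ (h : EuclideanSpace ℝ (Fin d)) (τ : ℝ) (z : Pt d) : Pt d :=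
  (z.1, z.2.1, z.2.2 + τ • h)

/-- Flow of the constant field `⟨h, ∇ₓ⟩`. -/
def flowX (h : EuclideanSpace ℝ (Fin d)) (τ : ℝ) (z : Pt d) : Pt d :=
  (z.1, z.2.1 + τ • h, z.2.2)

/-- `u` has a Lie derivative at `z` along the flow `φ`. -/
def HasLieAt (φ : ℝ → Pt d → Pt d) (u : Pt d → ℝ) (z : Pt d) : Prop :=
  DifferentiableAt ℝ (fun τ => u (φ τ z)) 0

/-- Lie derivative along `Y` (junk value if it does not exist). -/
def lieY (u : Pt d → ℝ) (z : Pt d) : ℝ := deriv (fun τ => u (flowY τ z)) 0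

/-- Partial derivative `∂_{v_i}` as a Lie derivative along `Z_i`. -/
def dv (i : Fin d) (u : Pt d → ℝ) (z : Pt d) : ℝ :=
  deriv (fun τ => u (flowZ (EuclideanSpace.single i 1) τ z)) 0

/-- Partial derivative `∂_{x_i}`. -/
def dx (i : Fin d) (u : Pt d → ℝ) (z : Pt d) : ℝ :=
  deriv (fun τ => u (flowX (EuclideanSpace.single i 1) τ z)) 0

/-- The list of indices associated to a multi-index `β` (index `i` repeated `β i` times). -/
def idxList (β : Fin d → ℕ) : List (Fin d) := (List.ofFn fun i => List.replicate (β i) i).flatten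

/-- Iterated application of first-order operators along a list of indices. -/
def derivList (D : Fin d → (Pt d → ℝ) → Pt d → ℝ) : List (Fin d) → (Pt d → ℝ) → Pt d → ℝ
  | [], u => u
  | i :: l, u => D i (derivList D l u)

/-- `∂_v^β u`. -/
def dvPow (β : Fin d → ℕ) (u : Pt d → ℝ) : Pt d → ℝ := derivList dv (idxList β) u

/-- `∂_x^γ u`. -/
def dxPow (γ : Fin d → ℕ) (u : Pt d → ℝ) : Pt d → ℝ := derivList dx (idxList γ) u

/-- All the intermediate derivatives in an iterated derivative exist at every point. -/
def ExistsDList (φ : Fin d → ℝ → Pt d → Pt d) (D : Fin d → (Pt d → ℝ) → Pt d → ℝ) :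
    List (Fin d) → (Pt d → ℝ) → Prop
  | [], _ => True
  | i :: l, u => ExistsDList φ D l u ∧ ∀ z, HasLieAt (φ i) (derivList D l u) z

/-- `∂_v^β u` exists (at every point, at every stage). -/
def ExistsDvPow (β : Fin d → ℕ) (u : Pt d → ℝ) : Prop :=
  ExistsDList (fun i => flowZ (EuclideanSpace.single i 1)) dv (idxList β) u

/-- `∂_x^γ u` exists (at every point, at every stage). -/
def ExistsDxPow (γ : Fin d → ℕ) (u : Pt d → ℝ) : Prop :=
  ExistsDList (fun i => flowX (EuclideanSpace.single i 1)) dx (idxList γ) u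

/-- The iterated Lie derivatives `Y^j u`, `j = 1, …, k`, exist at every point. -/
def ExistsLieYIter (u : Pt d → ℝ) : ℕ → Prop
  | 0 => True
  | k + 1 => ExistsLieYIter u k ∧ ∀ z : Pt d, HasLieAt flowY (lieY^[k] u) z

/-- Hölder seminorm `‖u‖_{C^α_{Z_i}}`. -/
def semiZ (i : Fin d) (α : ℝ) (u : Pt d → ℝ) : ℝ≥0∞ :=
  ⨆ (z : Pt d) (τ : ℝ) (_ : τ ≠ 0),
    ENNReal.ofReal (|u (flowZ (EuclideanSpace.single i 1) τ z) - u z| / |τ| ^ α)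

/-- Hölder seminorm `‖u‖_{C^α_Y}`. -/
def semiY (ϑ α : ℝ) (u : Pt d → ℝ) : ℝ≥0∞ :=
  ⨆ (z : Pt d) (τ : ℝ) (_ : τ ≠ 0),
    ENNReal.ofReal (|u (flowY τ z) - u z| / |τ| ^ (α / ϑ))

open Classical in
/-- The intrinsic Hölder seminorm `‖u‖_{C^α}`, defined recursively (with fuel). -/
def hNormAux (ϑ : ℝ) : ℕ → ℝ → (Pt d → ℝ) → ℝ≥0∞
  | 0, α, u => semiY ϑ α u + ∑ i, semiZ i α u
  | n + 1, α, u =>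
    if α ≤ min 1 ϑ then semiY ϑ α u + ∑ i, semiZ i α u
    else if α ≤ max 1 ϑ then
      if ϑ < 1 then hNormAux ϑ n (α - ϑ) (lieY u) + ∑ i, semiZ i α u
      else semiY ϑ α u + ∑ i, hNormAux ϑ n (α - 1) (dv i u)
    else hNormAux ϑ n (α - ϑ) (lieY u) + ∑ i, hNormAux ϑ n (α - 1) (dv i u)

open Classical in
/-- Membership in the intrinsic Hölder space `C^α`, defined recursively (with fuel). -/
def memAux (ϑ : ℝ) : ℕ → ℝ → (Pt d → ℝ) → Prop
  | 0, α, u => hNormAux ϑ 0 α u ≠ ⊤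
  | n + 1, α, u =>
    if α ≤ min 1 ϑ then hNormAux ϑ (n + 1) α u ≠ ⊤
    else if α ≤ max 1 ϑ then
      if ϑ < 1 then
        (∀ z : Pt d, HasLieAt flowY u z) ∧ memAux ϑ n (α - ϑ) (lieY u) ∧
          hNormAux ϑ (n + 1) α u ≠ ⊤
      else
        (∀ (i : Fin d) (z : Pt d), HasLieAt (flowZ (EuclideanSpace.single i 1)) u z) ∧
          (∀ i : Fin d, memAux ϑ n (α - 1) (dv i u)) ∧ hNormAux ϑ (n + 1) α u ≠ ⊤
    else
      (∀ z : Pt d, HasLieAt flowY u z) ∧ memAux ϑ n (α - ϑ) (lieY u) ∧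
        (∀ (i : Fin d) (z : Pt d), HasLieAt (flowZ (EuclideanSpace.single i 1)) u z) ∧
          (∀ i : Fin d, memAux ϑ n (α - 1) (dv i u)) ∧ hNormAux ϑ (n + 1) α u ≠ ⊤

/-- Enough fuel for the recursion defining `C^α`. -/
def fuel (ϑ α : ℝ) : ℕ := Nat.ceil (α / min 1 ϑ) + 1

/-- The intrinsic Hölder seminorm `‖u‖_{C^α}` (value in `ℝ≥0∞`). -/
def holderNorm (ϑ α : ℝ) (u : Pt d → ℝ) : ℝ≥0∞ := hNormAux ϑ (fuel ϑ α) α u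

/-- `u ∈ C^α`. -/
def IsHolder (ϑ α : ℝ) (u : Pt d → ℝ) : Prop := memAux ϑ (fuel ϑ α) α u



open Filter Topology

theorem hasDerivAt_param {f f' : ℝ → ℝ → ℝ} (hf : ∀ a, Continuous (f a))
    (hf' : Continuous (Function.uncurry f'))
    (h : ∀ a r, HasDerivAt (fun a => f a r) (f' a r) a) (c e a0 : ℝ) :
    HasDerivAt (fun a => ∫ r in c..e, f a r) (∫ r in c..e, f' a0 r) a0 := by
  have hK : IsCompact (Metric.closedBall a0 1 ×ˢ Set.uIcc c e) :=
    (isCompact_closedBall _ _).prod isCompact_uIcc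
  obtain ⟨C, hC⟩ := hK.exists_bound_of_continuousOn hf'.continuousOn
  have hm : Continuous (f' a0) := by
    have : Continuous fun r => Function.uncurry f' (a0, r) := by fun_prop
    exact this
  refine (intervalIntegral.hasDerivAt_integral_of_dominated_loc_of_deriv_le
    (bound := fun _ => C) (Metric.closedBall_mem_nhds a0 one_pos) ?_ ?_ ?_ ?_ ?_ ?_).2
  · exact Eventually.of_forall fun a => (hf a).aestronglyMeasurable
  · exact (hf a0).intervalIntegrable _ _
  · exact hm.aestronglyMeasurable
  · exact Eventually.of_forall fun t ht x hx => hC (x, t) ⟨hx, Set.uIoc_subset_uIcc ht⟩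
  · exact intervalIntegrable_const
  · exact Eventually.of_forall fun t ht x hx => h x t

theorem continuous_flowY : Continuous fun q : ℝ × Pt d => flowY q.1 q.2 := by
  unfold flowY; fun_prop

theorem continuous_flowZ (h : EuclideanSpace ℝ (Fin d)) :
    Continuous fun q : ℝ × Pt d => flowZ h q.1 q.2 := by
  unfold flowZ; fun_prop

theorem continuous_flowX (h : EuclideanSpace ℝ (Fin d)) :
    Continuous fun q : ℝ × Pt d => flowX h q.1 q.2 := by
  unfold flowX; fun_prop

theorem flowY_add (s r : ℝ) (z : Pt d) : flowY (s + r) z = flowY r (flowY s z) := by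
  simp only [flowY, Prod.mk.injEq, and_true]
  constructor
  · ring
  · module

theorem flowZ_add (h : EuclideanSpace ℝ (Fin d)) (s r : ℝ) (z : Pt d) :
    flowZ h (s + r) z = flowZ h r (flowZ h s z) := by
  simp only [flowZ, Prod.mk.injEq, true_and]
  module

theorem flowX_add (h : EuclideanSpace ℝ (Fin d)) (s r : ℝ) (z : Pt d) :
    flowX h (s + r) z = flowX h r (flowX h s z) := by
  simp only [flowX, Prod.mk.injEq, true_and, and_true]
  module

theorem flowY_zero (z : Pt d) : flowY 0 z = z := by simp [flowY]
theorem flowZ_zero (h : EuclideanSpace ℝ (Fin d)) (z : Pt d) : flowZ h 0 z = z := by simp [flowZ]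
theorem flowX_zero (h : EuclideanSpace ℝ (Fin d)) (z : Pt d) : flowX h 0 z = z := by simp [flowX]

/-- Derivative along a flow at all times. -/
theorem hasDerivAt_flow {φ : ℝ → Pt d → Pt d} (hadd : ∀ s r z, φ (s + r) z = φ r (φ s z))
    {f : Pt d → ℝ} (hf : ∀ z, HasLieAt φ f z) (z : Pt d) (s : ℝ) :
    HasDerivAt (fun τ => f (φ τ z)) (deriv (fun τ => f (φ τ (φ s z))) 0) s := by
  have h1 : HasDerivAt (fun τ => f (φ τ (φ s z))) (deriv (fun τ => f (φ τ (φ s z))) 0) (s - s) := by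
    rw [sub_self]; exact (hf (φ s z)).hasDerivAt
  have h2 := h1.comp_sub_const s s
  refine h2.congr_of_eventuallyEq (Eventually.of_forall fun τ => ?_)
  simp only [← hadd]
  congr 2
  ring

theorem hasDerivAt_Y {f : Pt d → ℝ} (hf : ∀ z, HasLieAt flowY f z) (z : Pt d) (s : ℝ) :
    HasDerivAt (fun τ => f (flowY τ z)) (lieY f (flowY s z)) s :=
  hasDerivAt_flow flowY_add hf z s

theorem hasDerivAt_Z {i : Fin d} {f : Pt d → ℝ}
    (hf : ∀ z, HasLieAt (flowZ (EuclideanSpace.single i 1)) f z) (z : Pt d) (s : ℝ) :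
    HasDerivAt (fun τ => f (flowZ (EuclideanSpace.single i 1) τ z))
      (dv i f (flowZ (EuclideanSpace.single i 1) s z)) s :=
  hasDerivAt_flow (flowZ_add _) hf z s

/-- Average along the x-direction. -/
def avgX (e : EuclideanSpace ℝ (Fin d)) (η : ℝ) (f : Pt d → ℝ) (p : Pt d) : ℝ :=
  ∫ r in (0:ℝ)..η, f (flowX e r p)

theorem continuous_avgX (e : EuclideanSpace ℝ (Fin d)) (η : ℝ) {f : Pt d → ℝ}
    (hf : Continuous f) : Continuous (avgX e η f) := by
  unfold avgX
  apply intervalIntegral.continuous_parametric_intervalIntegral_of_continuous'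
  exact hf.comp ((continuous_flowX e).comp continuous_swap)

theorem avgX_deriv_flow (e : EuclideanSpace ℝ (Fin d)) (η : ℝ) {f g : Pt d → ℝ}
    (hf : Continuous f) (hg : Continuous g) {φ : ℝ → Pt d → Pt d}
    (hφ : Continuous fun q : ℝ × Pt d => φ q.1 q.2)
    (hcomm : ∀ s r z, flowX e r (φ s z) = φ s (flowX e r z))
    (h : ∀ z s, HasDerivAt (fun τ => f (φ τ z)) (g (φ s z)) s) (z : Pt d) (s : ℝ) :
    HasDerivAt (fun τ => avgX e η f (φ τ z)) (avgX e η g (φ s z)) s := by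
  unfold avgX
  refine hasDerivAt_param (f := fun τ r => f (flowX e r (φ τ z)))
    (f' := fun τ r => g (flowX e r (φ τ z))) ?_ ?_ ?_ 0 η s
  · intro a
    exact hf.comp ((continuous_flowX e).comp (by fun_prop : Continuous fun r : ℝ => (r, φ a z)))
  · have h1 : Continuous fun q : ℝ × ℝ => φ q.1 z :=
      hφ.comp (by fun_prop : Continuous fun q : ℝ × ℝ => (q.1, z))
    exact hg.comp ((continuous_flowX e).comp
      (by fun_prop : Continuous fun q : ℝ × ℝ => (q.2, φ q.1 z)))
  · intro a r
    simp only [hcomm]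
    exact h _ a

theorem avgX_deriv_X (e : EuclideanSpace ℝ (Fin d)) (η : ℝ) {f : Pt d → ℝ}
    (hf : Continuous f) (z : Pt d) (s : ℝ) :
    HasDerivAt (fun δ => avgX e η f (flowX e δ z))
      (f (flowX e η (flowX e s z)) - f (flowX e s z)) s := by
  have hc : Continuous fun r : ℝ => f (flowX e r z) :=
    hf.comp ((continuous_flowX e).comp (by fun_prop : Continuous fun r : ℝ => (r, z)))
  have key : (fun δ => avgX e η f (flowX e δ z)) =
      fun δ => (∫ r in (0:ℝ)..(η + δ), f (flowX e r z)) - ∫ r in (0:ℝ)..δ, f (flowX e r z) := by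
    funext δ
    unfold avgX
    rw [intervalIntegral.integral_interval_sub_left (hc.intervalIntegrable _ _)
      (hc.intervalIntegrable _ _)]
    have := intervalIntegral.integral_comp_add_right (a := 0) (b := η)
      (fun r => f (flowX e r z)) δ
    rw [zero_add] at this
    rw [← this]
    refine intervalIntegral.integral_congr fun r _ => ?_
    simp only [← flowX_add, add_comm]
  rw [key]
  have h1 : ∀ x, HasDerivAt (fun y => ∫ r in (0:ℝ)..y, f (flowX e r z)) (f (flowX e x z)) x :=
    fun x => hc.integral_hasStrictDerivAt 0 x |>.hasDerivAt
  have h2 := (h1 (η + s)).comp_const_add η s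
  rw [← flowX_add, add_comm s η]
  exact h2.sub (h1 s)

/-- Chain rule for the averaged function along a sheared curve. -/
theorem avgX_chain (e : EuclideanSpace ℝ (Fin d)) (η : ℝ) {f : Pt d → ℝ}
    (hf : Continuous f) (hY : ∀ z, HasLieAt flowY f z) (hg : Continuous (lieY f))
    (c : ℝ) (q : Pt d) (a : ℝ) :
    HasDerivAt (fun a => avgX e η f (flowX e (-a * c) (flowY a q)))
      (avgX e η (lieY f) (flowX e (-a * c) (flowY a q))
        - c * (f (flowX e η (flowX e (-a * c) (flowY a q))) - f (flowX e (-a * c) (flowY a q))))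
      a := by
  have hcomm : ∀ s r (z : Pt d), flowX e r (flowY s z) = flowY s (flowX e r z) := by
    intro s r z
    simp only [flowX, flowY, Prod.mk.injEq, and_true, true_and]
    module
  have hcX : ∀ b : ℝ, Continuous fun z : Pt d => flowX e b z := fun b =>
    (continuous_flowX e).comp (by fun_prop : Continuous fun z : Pt d => (b, z))
  have hXY : Continuous fun w : ℝ × ℝ => flowX e w.2 (flowY w.1 q) := by
    have h1 : Continuous fun w : ℝ × ℝ => flowY w.1 q :=
      continuous_flowY.comp (by fun_prop : Continuous fun w : ℝ × ℝ => (w.1, q))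
    exact (continuous_flowX e).comp (by fun_prop : Continuous fun w : ℝ × ℝ => (w.2, flowY w.1 q))
  let G : ℝ → ℝ → ℝ := fun a b => avgX e η f (flowX e b (flowY a q))
  let g1 : ℝ → ℝ → ℝ := fun a b => avgX e η (lieY f) (flowX e b (flowY a q))
  let g2 : ℝ → ℝ → ℝ := fun a b =>
    f (flowX e η (flowX e b (flowY a q))) - f (flowX e b (flowY a q))
  have hg1 : Continuous fun w : ℝ × ℝ => g1 w.1 w.2 := (continuous_avgX e η hg).comp hXY
  have hg2 : Continuous fun w : ℝ × ℝ => g2 w.1 w.2 :=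
    (hf.comp ((hcX η).comp hXY)).sub (hf.comp hXY)
  have main := hasStrictFDerivAt_uncurry_coprod (𝕜 := ℝ) (u := (a, -a * c)) (f := G)
    (f₁ := fun a b => ContinuousLinearMap.toSpanSingleton ℝ (g1 a b))
    (f₂ := fun a b => ContinuousLinearMap.toSpanSingleton ℝ (g2 a b))
    (Eventually.of_forall fun w => by
      have := avgX_deriv_flow e η hf hg continuous_flowY hcomm (hasDerivAt_Y hY)
        (flowX e w.2 q) w.1
      simp only [← hcomm] at this
      exact this.hasFDerivAt)
    (Eventually.of_forall fun w => (avgX_deriv_X e η hf (flowY w.1 q) w.2).hasFDerivAt)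
    (Continuous.continuousAt
      ((ContinuousLinearMap.toSpanSingletonLE ℝ ℝ ℝ).toLinearMap.continuous_of_finiteDimensional.comp hg1))
    (Continuous.continuousAt
      ((ContinuousLinearMap.toSpanSingletonLE ℝ ℝ ℝ).toLinearMap.continuous_of_finiteDimensional.comp hg2))
  have hcurve : HasDerivAt (fun a : ℝ => (a, -a * c)) ((1 : ℝ), -1 * c) a :=
    (hasDerivAt_id a).prodMk ((hasDerivAt_id a).neg.mul_const c)
  have := main.hasFDerivAt.comp_hasDerivAt a hcurve
  refine this.congr_deriv ?_
  simp [g1, g2, Function.HasUncurry.uncurry]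
  ring

/-- The commutator identity in integrated form. -/
theorem commutator_integral (i : Fin d) {u : Pt d → ℝ} (hu : Continuous u)
    (hY : ∀ z, HasLieAt flowY u z) (hYc : Continuous (lieY u))
    (hZ : ∀ z, HasLieAt (flowZ (EuclideanSpace.single i 1)) u z) (hZc : Continuous (dv i u))
    (hZY : ∀ z, HasLieAt (flowZ (EuclideanSpace.single i 1)) (lieY u) z)
    (hZYc : Continuous (dv i (lieY u)))
    (hYZ : ∀ z, HasLieAt flowY (dv i u) z) (hYZc : Continuous (lieY (dv i u)))
    (η : ℝ) (p : Pt d) :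
    u (flowX (EuclideanSpace.single i 1) η p) - u p =
      avgX (EuclideanSpace.single i 1) η (dv i (lieY u)) p
        - avgX (EuclideanSpace.single i 1) η (lieY (dv i u)) p := by
  set e : EuclideanSpace ℝ (Fin d) := EuclideanSpace.single i 1 with he
  have hP : ∀ a c : ℝ, flowX e (-a * c) (flowY a (flowZ e c p)) = flowZ e c (flowY a p) := by
    intro a c
    simp only [flowX, flowY, flowZ, Prod.mk.injEq, and_true, true_and]
    module
  have hcommZ : ∀ s r (z : Pt d), flowX e r (flowZ e s z) = flowZ e s (flowX e r z) := by
    intro s r z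
    simp only [flowX, flowZ]
  have hZp : Continuous fun c : ℝ => flowZ e c p :=
    (continuous_flowZ e).comp (by fun_prop : Continuous fun c : ℝ => (c, p))
  have hPc : Continuous fun w : ℝ × ℝ => flowZ e w.2 (flowY w.1 p) := by
    have h1 : Continuous fun w : ℝ × ℝ => flowY w.1 p :=
      continuous_flowY.comp (by fun_prop : Continuous fun w : ℝ × ℝ => (w.1, p))
    exact (continuous_flowZ e).comp (by fun_prop : Continuous fun w : ℝ × ℝ => (w.2, flowY w.1 p))
  have hXc : Continuous fun z : Pt d => flowX e η z :=
    (continuous_flowX e).comp (by fun_prop : Continuous fun z : Pt d => (η, z))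
  let K : (Pt d → ℝ) → Pt d → ℝ := fun f z => f (flowX e η z) - f z
  have hK : ∀ f : Pt d → ℝ, Continuous f → Continuous (K f) := fun f hf =>
    (hf.comp hXc).sub hf
  -- first identity
  have id1 : ∀ a c : ℝ, avgX e η u (flowZ e c (flowY a p)) - avgX e η u (flowY a p) =
      ∫ σ in (0:ℝ)..c, avgX e η (dv i u) (flowZ e σ (flowY a p)) := by
    intro a c
    rw [intervalIntegral.integral_eq_sub_of_hasDerivAt
      (f := fun c => avgX e η u (flowZ e c (flowY a p)))]
    · simp only [flowZ_zero]
    · intro σ _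
      exact avgX_deriv_flow e η hu hZc (continuous_flowZ e) hcommZ (hasDerivAt_Z hZ) _ _
    · refine Continuous.intervalIntegrable ?_ _ _
      exact ((continuous_avgX e η hZc).comp hPc).comp
        (by fun_prop : Continuous fun c : ℝ => (a, c))
  -- derivative in `a`
  have hder : ∀ {f : Pt d → ℝ}, Continuous f → (∀ z, HasLieAt flowY f z) → Continuous (lieY f) →
      ∀ c a, HasDerivAt (fun a => avgX e η f (flowZ e c (flowY a p)))
        (avgX e η (lieY f) (flowZ e c (flowY a p)) - c * K f (flowZ e c (flowY a p))) a := by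
    intro f hf h1 h2 c a
    have := avgX_chain e η hf h1 h2 c (flowZ e c p) a
    simp only [hP] at this
    exact this
  have id2 : ∀ c : ℝ, avgX e η (lieY u) (flowZ e c p) - c * K u (flowZ e c p)
      - avgX e η (lieY u) p = ∫ σ in (0:ℝ)..c,
        (avgX e η (lieY (dv i u)) (flowZ e σ p) - σ * K (dv i u) (flowZ e σ p)) := by
    intro c
    have hL : HasDerivAt (fun a => avgX e η u (flowZ e c (flowY a p)) - avgX e η u (flowY a p))
        (avgX e η (lieY u) (flowZ e c p) - c * K u (flowZ e c p) - avgX e η (lieY u) p) 0 := by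
      have h1 := hder hu hY hYc c 0
      have h2 := hder hu hY hYc 0 0
      simp only [flowZ_zero, flowY_zero, zero_mul, sub_zero] at h1 h2
      exact h1.sub h2
    have hR := hasDerivAt_param
      (f := fun a σ => avgX e η (dv i u) (flowZ e σ (flowY a p)))
      (f' := fun a σ => avgX e η (lieY (dv i u)) (flowZ e σ (flowY a p))
        - σ * K (dv i u) (flowZ e σ (flowY a p)))
      (fun a => ((continuous_avgX e η hZc).comp hPc).comp
        (by fun_prop : Continuous fun c : ℝ => (a, c)))
      (((continuous_avgX e η hYZc).comp hPc).sub
        (continuous_snd.mul ((hK _ hZc).comp hPc)))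
      (fun a σ => hder hZc hYZ hYZc σ a) 0 c 0
    simp only [id1] at hL
    have := hL.unique hR
    simpa only [flowY_zero] using this
  -- derivative in `c`
  have hL : HasDerivAt (fun c => avgX e η (lieY u) (flowZ e c p) - c * K u (flowZ e c p)
      - avgX e η (lieY u) p) (avgX e η (dv i (lieY u)) p - K u p) 0 := by
    have h1 := avgX_deriv_flow e η hYc hZYc (continuous_flowZ e) hcommZ (hasDerivAt_Z hZY) p 0
    have h2 : HasDerivAt (fun c => K u (flowZ e c p)) (K (dv i u) (flowZ e 0 p)) 0 := by
      have h3 := hasDerivAt_Z hZ (flowX e η p) 0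
      have h4 := hasDerivAt_Z hZ p 0
      simp only [← he, ← hcommZ] at h3 h4
      exact h3.sub h4
    have h5 := (h1.sub ((hasDerivAt_id (0:ℝ)).mul h2)).sub_const (avgX e η (lieY u) p)
    simp only [flowZ_zero, id, zero_mul, add_zero, one_mul] at h5
    exact h5
  have hR : HasDerivAt (fun c => ∫ σ in (0:ℝ)..c,
      (avgX e η (lieY (dv i u)) (flowZ e σ p) - σ * K (dv i u) (flowZ e σ p)))
      (avgX e η (lieY (dv i u)) p) 0 := by
    have hc : Continuous fun σ : ℝ =>
        (avgX e η (lieY (dv i u)) (flowZ e σ p) - σ * K (dv i u) (flowZ e σ p)) :=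
      ((continuous_avgX e η hYZc).comp hZp).sub (continuous_id.mul ((hK _ hZc).comp hZp))
    have := (hc.integral_hasStrictDerivAt 0 0).hasDerivAt
    simpa only [flowZ_zero, zero_mul, sub_zero] using this
  simp only [id2] at hL
  have := hL.unique hR
  simp only [K] at this
  linarith

theorem commutator_deriv (i : Fin d) {u : Pt d → ℝ} (hu : Continuous u)
    (hY : ∀ z, HasLieAt flowY u z) (hYc : Continuous (lieY u))
    (hZ : ∀ z, HasLieAt (flowZ (EuclideanSpace.single i 1)) u z) (hZc : Continuous (dv i u))
    (hZY : ∀ z, HasLieAt (flowZ (EuclideanSpace.single i 1)) (lieY u) z)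
    (hZYc : Continuous (dv i (lieY u)))
    (hYZ : ∀ z, HasLieAt flowY (dv i u) z) (hYZc : Continuous (lieY (dv i u)))
    (p : Pt d) :
    HasDerivAt (fun δ : ℝ => u (flowX (EuclideanSpace.single i 1) δ p))
        (dv i (lieY u) p - lieY (dv i u) p) 0 := by
  have key := commutator_integral i hu hY hYc hZ hZc hZY hZYc hYZ hYZc
  have heq : (fun δ : ℝ => u (flowX (EuclideanSpace.single i 1) δ p)) = fun η =>
      avgX (EuclideanSpace.single i 1) η (dv i (lieY u)) p
        - avgX (EuclideanSpace.single i 1) η (lieY (dv i u)) p + u p := by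
    funext η
    linarith [key η p]
  rw [heq]
  have hd : ∀ g : Pt d → ℝ, Continuous g →
      HasDerivAt (fun η => avgX (EuclideanSpace.single i 1) η g p) (g p) 0 := by
    intro g hg
    have hc : Continuous fun r : ℝ => g (flowX (EuclideanSpace.single i 1) r p) :=
      hg.comp ((continuous_flowX _).comp (by fun_prop : Continuous fun r : ℝ => (r, p)))
    have := (hc.integral_hasStrictDerivAt 0 0).hasDerivAt
    rw [flowX_zero] at this
    exact this
  exact ((hd _ hZYc).sub (hd _ hYZc)).add_const _

/-- Local uniform continuity along a flow. -/
def GoodAlong (φ : ℝ → Pt d → Pt d) (f : Pt d → ℝ) : Prop :=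
  ∀ z0 : Pt d, Tendsto (fun q : ℝ × Pt d => f (φ q.1 q.2) - f q.2) (𝓝 (0, z0)) (𝓝 0)

theorem goodAlong_of_deriv {φ : ℝ → Pt d → Pt d} {f g : Pt d → ℝ} (hg : Continuous g)
    (hφ : Continuous fun q : ℝ × Pt d => φ q.1 q.2) (h0 : ∀ z, φ 0 z = z)
    (h : ∀ z s, HasDerivAt (fun τ => f (φ τ z)) (g (φ s z)) s) : GoodAlong φ f := by
  intro z0
  have hgc : Continuous fun q : Pt d × ℝ => g (φ q.2 q.1) := hg.comp (hφ.comp continuous_swap)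
  have heq : (fun q : ℝ × Pt d => f (φ q.1 q.2) - f q.2) =
      fun q => ∫ r in (0:ℝ)..q.1, g (φ r q.2) := by
    funext q
    rw [intervalIntegral.integral_eq_sub_of_hasDerivAt (f := fun τ => f (φ τ q.2))]
    · simp only [h0]
    · exact fun σ _ => h _ _
    · refine Continuous.intervalIntegrable ?_ _ _
      exact hgc.comp (by fun_prop : Continuous fun r : ℝ => (q.2, r))
  rw [heq]
  have hc : Continuous fun q : ℝ × Pt d => ∫ r in (0:ℝ)..q.1, g (φ r q.2) := by
    have := intervalIntegral.continuous_parametric_intervalIntegral_of_continuous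
      (μ := MeasureTheory.volume) (f := fun (q : ℝ × Pt d) r => g (φ r q.2)) (a₀ := 0)
      (hgc.comp (by fun_prop : Continuous fun w : (ℝ × Pt d) × ℝ => (w.1.2, w.2)))
      (continuous_fst)
    exact this
  have := hc.tendsto (0, z0)
  simpa using this

theorem goodAlong_of_holder {φ : ℝ → Pt d → Pt d} {f : Pt d → ℝ} {γ C : ℝ} (hγ : 0 < γ)
    (h : ∀ z τ, |f (φ τ z) - f z| ≤ C * |τ| ^ γ) : GoodAlong φ f := by
  intro z0
  apply squeeze_zero_norm (a := fun q : ℝ × Pt d => C * |q.1| ^ γ)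
  · exact fun q => h q.2 q.1
  · have hc : Continuous fun q : ℝ × Pt d => C * |q.1| ^ γ :=
      continuous_const.mul ((continuous_abs.comp continuous_fst).rpow_const fun _ => Or.inr hγ.le)
    have := hc.tendsto (0, z0)
    simpa [Real.zero_rpow hγ.ne'] using this

theorem GoodAlong.step {φ : ℝ → Pt d → Pt d} {f : Pt d → ℝ} (h : GoodAlong φ f)
    {ι : Type*} {l : Filter ι} {p : ι → Pt d} {τ : ι → ℝ} {z0 : Pt d}
    (hτ : Tendsto τ l (𝓝 0)) (hp : Tendsto p l (𝓝 z0)) :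
    Tendsto (fun n => f (φ (τ n) (p n)) - f (p n)) l (𝓝 0) :=
  (h z0).comp (hτ.prodMk_nhds hp)

theorem goodZ_all {f : Pt d → ℝ}
    (h : ∀ i : Fin d, GoodAlong (flowZ (EuclideanSpace.single i 1)) f)
    {ι : Type*} {l : Filter ι} {p : ι → Pt d} {w : ι → EuclideanSpace ℝ (Fin d)} {z0 : Pt d}
    (hw : Tendsto w l (𝓝 0)) (hp : Tendsto p l (𝓝 z0)) :
    Tendsto (fun n => f (flowZ (w n) 1 (p n)) - f (p n)) l (𝓝 0) := by
  have hwi : ∀ i, Tendsto (fun n => w n i) l (𝓝 0) := by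
    intro i
    have hc : Continuous fun y : EuclideanSpace ℝ (Fin d) => y i := by fun_prop
    have := (hc.tendsto 0).comp hw
    simpa [Function.comp_def] using this
  have key : ∀ s : Finset (Fin d),
      Tendsto (fun n => f (flowZ (∑ i ∈ s, w n i • EuclideanSpace.single i (1:ℝ)) 1 (p n))
        - f (p n)) l (𝓝 0) := by
    intro s
    induction s using Finset.induction_on with
    | empty =>
      simp only [Finset.sum_empty, flowZ, smul_zero, add_zero, Prod.mk.eta, sub_self]
      exact tendsto_const_nhds
    | insert j s hj ih =>
      have hsum : Tendsto (fun n => ∑ i ∈ s, w n i • (EuclideanSpace.single i (1:ℝ) :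
          EuclideanSpace ℝ (Fin d))) l (𝓝 0) := by
        have := tendsto_finsetSum s fun i _ =>
          (hwi i).smul_const (EuclideanSpace.single i (1:ℝ) : EuclideanSpace ℝ (Fin d))
        simpa using this
      have hq : Tendsto (fun n => flowZ (∑ i ∈ s, w n i • EuclideanSpace.single i (1:ℝ)) 1 (p n))
          l (𝓝 z0) := by
        have hc : Continuous fun q : EuclideanSpace ℝ (Fin d) × Pt d => flowZ q.1 1 q.2 := by
          unfold flowZ; fun_prop
        have := (hc.tendsto (0, z0)).comp (hsum.prodMk_nhds hp)
        simpa [flowZ, Function.comp_def] using this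
      have := ((h j).step (hwi j) hq).add ih
      simp only [add_zero] at this
      refine this.congr fun n => ?_
      rw [Finset.sum_insert hj]
      have : flowZ (w n j • EuclideanSpace.single j (1:ℝ)
          + ∑ i ∈ s, w n i • EuclideanSpace.single i (1:ℝ)) 1 (p n) =
          flowZ (EuclideanSpace.single j 1) (w n j)
            (flowZ (∑ i ∈ s, w n i • EuclideanSpace.single i (1:ℝ)) 1 (p n)) := by
        simp only [flowZ, Prod.mk.injEq, true_and]
        module
      rw [this]
      ring
  have := key Finset.univ
  refine this.congr fun n => ?_
  have : ∑ i, w n i • EuclideanSpace.single i (1:ℝ) = w n := by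
    ext j
    simp [Finset.sum_apply, Pi.single_apply]
  rw [this]

theorem continuous_of_good {f : Pt d → ℝ} (hY : GoodAlong flowY f)
    (hZ : ∀ i : Fin d, GoodAlong (flowZ (EuclideanSpace.single i 1)) f) : Continuous f := by
  rw [continuous_iff_continuousAt]
  intro z0
  have hFY : ∀ {τ : Pt d → ℝ} {p : Pt d → Pt d}, Tendsto τ (𝓝 z0) (𝓝 0) →
      Tendsto p (𝓝 z0) (𝓝 z0) → Tendsto (fun z => flowY (τ z) (p z)) (𝓝 z0) (𝓝 z0) := by
    intro τ p h1 h2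
    have := (continuous_flowY.tendsto (0, z0)).comp (h1.prodMk_nhds h2)
    simpa [flowY, Function.comp_def] using this
  have hFZ : ∀ {τ : Pt d → EuclideanSpace ℝ (Fin d)} {p : Pt d → Pt d},
      Tendsto τ (𝓝 z0) (𝓝 0) →
      Tendsto p (𝓝 z0) (𝓝 z0) → Tendsto (fun z => flowZ (τ z) 1 (p z)) (𝓝 z0) (𝓝 z0) := by
    intro τ p h1 h2
    have hc : Continuous fun q : EuclideanSpace ℝ (Fin d) × Pt d => flowZ q.1 1 q.2 := by
      unfold flowZ; fun_prop
    have := (hc.tendsto (0, z0)).comp (h1.prodMk_nhds h2)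
    simpa [flowZ, Function.comp_def] using this
  let ξ : Pt d → EuclideanSpace ℝ (Fin d) := fun z => z.2.1 - z0.2.1 - (z.1 - z0.1) • z0.2.2
  let τ : Pt d → ℝ := fun z => √‖ξ z‖
  let h : Pt d → EuclideanSpace ℝ (Fin d) := fun z => (τ z)⁻¹ • ξ z
  have hτ : Tendsto τ (𝓝 z0) (𝓝 0) := by
    have hc : Continuous τ := by
      simp only [τ, ξ]; fun_prop
    have := hc.tendsto z0
    simpa [τ, ξ] using this
  have hnh : ∀ z, ‖h z‖ = τ z := by
    intro z
    have hx : ‖ξ z‖ = τ z * τ z := (Real.mul_self_sqrt (norm_nonneg _)).symm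
    have ha : |τ z| = τ z := abs_of_nonneg (Real.sqrt_nonneg _)
    have hz : ‖h z‖ = (τ z)⁻¹ * (τ z * τ z) := by
      rw [← hx]
      simp only [h, norm_smul, norm_inv, Real.norm_eq_abs, ha]
    rw [hz]
    by_cases h0 : τ z = 0
    · rw [h0]; simp
    · exact inv_mul_cancel_left₀ h0 _
  have hτh : ∀ z, τ z • h z = ξ z := by
    intro z
    by_cases h0 : τ z = 0
    · have : ‖ξ z‖ = τ z * τ z := (Real.mul_self_sqrt (norm_nonneg _)).symm
      rw [h0, zero_smul]
      rw [h0, zero_mul, norm_eq_zero] at this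
      exact this.symm
    · exact smul_inv_smul₀ h0 _
  have hh : Tendsto h (𝓝 z0) (𝓝 0) := by
    rw [tendsto_zero_iff_norm_tendsto_zero]
    simpa only [hnh] using hτ
  have ht : Tendsto (fun z : Pt d => z.1 - z0.1) (𝓝 z0) (𝓝 0) := by
    have hc : Continuous fun z : Pt d => z.1 - z0.1 := by fun_prop
    simpa using hc.tendsto z0
  have hv : Tendsto (fun z : Pt d => z.2.2 - z0.2.2) (𝓝 z0) (𝓝 0) := by
    have hc : Continuous fun z : Pt d => z.2.2 - z0.2.2 := by fun_prop
    simpa using hc.tendsto z0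
  have hp0 : Tendsto (fun _ : Pt d => z0) (𝓝 z0) (𝓝 z0) := tendsto_const_nhds
  have hτn : Tendsto (fun z => -τ z) (𝓝 z0) (𝓝 0) := by simpa using hτ.neg
  have hhn : Tendsto (fun z => -h z) (𝓝 z0) (𝓝 0) := by simpa using hh.neg
  have hp1 := hFY ht hp0
  have hp2 := hFZ hv hp1
  have hp3 := hFY hτ hp2
  have hp4 := hFZ hhn hp3
  have hp5 := hFY hτn hp4
  have s := (((((hY.step ht hp0).add (goodZ_all hZ hv hp1)).add (hY.step hτ hp2)).add
    (goodZ_all hZ hhn hp3)).add (hY.step hτn hp4)).add (goodZ_all hZ hh hp5)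
  have s' := s.add_const (f z0)
  simp only [add_zero, zero_add] at s'
  refine s'.congr fun z => ?_
  have hfin : flowZ (h z) 1 (flowY (-τ z) (flowZ (-h z) 1 (flowY (τ z)
      (flowZ (z.2.2 - z0.2.2) 1 (flowY (z.1 - z0.1) z0))))) = z := by
    obtain ⟨t, x, v⟩ := z
    have h1 := hτh (t, x, v)
    simp only [flowZ, flowY, Prod.mk.injEq]
    refine ⟨by ring, ?_, by module⟩
    have h2 : ξ (t, x, v) = x - z0.2.1 - (t - z0.1) • z0.2.2 := rfl
    rw [h2] at h1
    have h3 : x = τ (t, x, v) • h (t, x, v) + z0.2.1 + (t - z0.1) • z0.2.2 := by rw [h1]; module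
    conv_rhs => rw [h3]
    module
  rw [hfin]
  ring

theorem le_of_semi {A B C : ℝ} {τ γ : ℝ} (hτ : τ ≠ 0) (hC : 0 ≤ C)
    (h : ENNReal.ofReal (|A - B| / |τ| ^ γ) ≤ ENNReal.ofReal C) : |A - B| ≤ C * |τ| ^ γ := by
  rw [ENNReal.ofReal_le_ofReal_iff hC, div_le_iff₀ (Real.rpow_pos_of_pos (abs_pos.2 hτ) _)] at h
  exact h

theorem goodY_of_semiY {ϑ α : ℝ} (hγ : 0 < α / ϑ) {f : Pt d → ℝ} (h : semiY ϑ α f ≠ ⊤) :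
    GoodAlong flowY f := by
  refine goodAlong_of_holder (γ := α / ϑ) (C := (semiY ϑ α f).toReal) hγ fun z τ => ?_
  by_cases hτ : τ = 0
  · simp [hτ, flowY_zero, Real.zero_rpow hγ.ne']
  · refine le_of_semi hτ ENNReal.toReal_nonneg ?_
    rw [ENNReal.ofReal_toReal h]
    exact le_iSup₂_of_le z τ (le_iSup_of_le hτ le_rfl)

theorem goodZ_of_semiZ {i : Fin d} {α : ℝ} (hγ : 0 < α) {f : Pt d → ℝ} (h : semiZ i α f ≠ ⊤) :
    GoodAlong (flowZ (EuclideanSpace.single i 1)) f := by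
  refine goodAlong_of_holder (γ := α) (C := (semiZ i α f).toReal) hγ fun z τ => ?_
  by_cases hτ : τ = 0
  · simp [hτ, flowZ_zero, Real.zero_rpow hγ.ne']
  · refine le_of_semi hτ ENNReal.toReal_nonneg ?_
    rw [ENNReal.ofReal_toReal h]
    exact le_iSup₂_of_le z τ (le_iSup_of_le hτ le_rfl)

theorem goodY_of_lie {f : Pt d → ℝ} (h : ∀ z, HasLieAt flowY f z) (hc : Continuous (lieY f)) :
    GoodAlong flowY f :=
  goodAlong_of_deriv hc continuous_flowY flowY_zero (hasDerivAt_Y h)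

theorem goodZ_of_lie {i : Fin d} {f : Pt d → ℝ}
    (h : ∀ z, HasLieAt (flowZ (EuclideanSpace.single i 1)) f z) (hc : Continuous (dv i f)) :
    GoodAlong (flowZ (EuclideanSpace.single i 1)) f :=
  goodAlong_of_deriv hc (continuous_flowZ _) (flowZ_zero _) (hasDerivAt_Z h)

theorem semi_of_add {A : ℝ≥0∞} {B : Fin d → ℝ≥0∞} (h : A + ∑ i, B i ≠ ⊤) :
    A ≠ ⊤ ∧ ∀ i, B i ≠ ⊤ := by
  rw [ENNReal.add_ne_top] at h
  exact ⟨h.1, fun i => ENNReal.sum_ne_top.1 h.2 i (Finset.mem_univ i)⟩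

theorem memAux_continuous {ϑ : ℝ} (hϑ : 0 < ϑ) : ∀ (n : ℕ) {α : ℝ} {f : Pt d → ℝ}, 0 < α →
    memAux ϑ n α f → Continuous f := by
  intro n
  induction n with
  | zero =>
    intro α f hα h
    obtain ⟨h1, h2⟩ := semi_of_add h
    exact continuous_of_good (goodY_of_semiY (div_pos hα hϑ) h1) fun i => goodZ_of_semiZ hα (h2 i)
  | succ n ih =>
    intro α f hα h
    rw [memAux] at h
    split_ifs at h with c1 c2 c3
    · rw [hNormAux, if_pos c1] at h
      obtain ⟨h1, h2⟩ := semi_of_add h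
      exact continuous_of_good (goodY_of_semiY (div_pos hα hϑ) h1)
        fun i => goodZ_of_semiZ hα (h2 i)
    · obtain ⟨hY, hm, hn⟩ := h
      rw [hNormAux, if_neg c1, if_pos c2, if_pos c3] at hn
      obtain ⟨-, h2⟩ := semi_of_add hn
      rw [min_eq_right c3.le] at c1
      exact continuous_of_good (goodY_of_lie hY (ih (by linarith) hm))
        fun i => goodZ_of_semiZ hα (h2 i)
    · obtain ⟨hZ, hm, hn⟩ := h
      rw [hNormAux, if_neg c1, if_pos c2, if_neg c3] at hn
      obtain ⟨h1, -⟩ := semi_of_add hn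
      rw [min_eq_left (not_lt.1 c3)] at c1
      exact continuous_of_good (goodY_of_semiY (div_pos hα hϑ) h1)
        fun i => goodZ_of_lie (hZ i) (ih (by linarith) (hm i))
    · obtain ⟨hY, hYm, hZ, hZm, hn⟩ := h
      rw [not_le, max_lt_iff] at c2
      exact continuous_of_good (goodY_of_lie hY (ih (by linarith) hYm))
        fun i => goodZ_of_lie (hZ i) (ih (by linarith) (hZm i))

theorem lieY_sub {f g : Pt d → ℝ} (hf : ∀ z, HasLieAt flowY f z) (hg : ∀ z, HasLieAt flowY g z) :
    (∀ z, HasLieAt flowY (fun z => f z - g z) z) ∧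
      lieY (fun z => f z - g z) = fun z => lieY f z - lieY g z :=
  ⟨fun z => DifferentiableAt.sub (hf z) (hg z),
    funext fun z => ((hf z).hasDerivAt.sub (hg z).hasDerivAt).deriv⟩

theorem dv_sub {i : Fin d} {f g : Pt d → ℝ}
    (hf : ∀ z, HasLieAt (flowZ (EuclideanSpace.single i 1)) f z)
    (hg : ∀ z, HasLieAt (flowZ (EuclideanSpace.single i 1)) g z) :
    (∀ z, HasLieAt (flowZ (EuclideanSpace.single i 1)) (fun z => f z - g z) z) ∧
      dv i (fun z => f z - g z) = fun z => dv i f z - dv i g z :=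
  ⟨fun z => DifferentiableAt.sub (hf z) (hg z),
    funext fun z => ((hf z).hasDerivAt.sub (hg z).hasDerivAt).deriv⟩

theorem quot_sub_le (a b c e w : ℝ) (hw : 0 ≤ w) :
    ENNReal.ofReal (|(a - b) - (c - e)| / w) ≤
      ENNReal.ofReal (|a - c| / w) + ENNReal.ofReal (|b - e| / w) := by
  rw [← ENNReal.ofReal_add (by positivity) (by positivity), ← add_div]
  apply ENNReal.ofReal_le_ofReal
  gcongr
  have : (a - b) - (c - e) = (a - c) - (b - e) := by ring
  rw [this]
  exact abs_sub _ _

theorem semiY_sub (ϑ α : ℝ) (f g : Pt d → ℝ) :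
    semiY ϑ α (fun z => f z - g z) ≤ semiY ϑ α f + semiY ϑ α g := by
  refine iSup₂_le fun z τ => iSup_le fun hτ => ?_
  refine (quot_sub_le _ _ _ _ _ (by positivity)).trans (add_le_add ?_ ?_)
  · exact le_iSup₂_of_le (f := fun (z : Pt d) (τ : ℝ) => ⨆ (_ : τ ≠ 0),
      ENNReal.ofReal (|f (flowY τ z) - f z| / |τ| ^ (α / ϑ))) z τ (le_iSup_of_le hτ le_rfl)
  · exact le_iSup₂_of_le (f := fun (z : Pt d) (τ : ℝ) => ⨆ (_ : τ ≠ 0),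
      ENNReal.ofReal (|g (flowY τ z) - g z| / |τ| ^ (α / ϑ))) z τ (le_iSup_of_le hτ le_rfl)

theorem semiZ_sub (i : Fin d) (α : ℝ) (f g : Pt d → ℝ) :
    semiZ i α (fun z => f z - g z) ≤ semiZ i α f + semiZ i α g := by
  refine iSup₂_le fun z τ => iSup_le fun hτ => ?_
  refine (quot_sub_le _ _ _ _ _ (by positivity)).trans (add_le_add ?_ ?_)
  · exact le_iSup₂_of_le (f := fun (z : Pt d) (τ : ℝ) => ⨆ (_ : τ ≠ 0),
      ENNReal.ofReal (|f (flowZ (EuclideanSpace.single i 1) τ z) - f z| / |τ| ^ α)) z τ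
      (le_iSup_of_le hτ le_rfl)
  · exact le_iSup₂_of_le (f := fun (z : Pt d) (τ : ℝ) => ⨆ (_ : τ ≠ 0),
      ENNReal.ofReal (|g (flowZ (EuclideanSpace.single i 1) τ z) - g z| / |τ| ^ α)) z τ
      (le_iSup_of_le hτ le_rfl)

theorem add_sum_le {A A1 A2 : ℝ≥0∞} {B B1 B2 : Fin d → ℝ≥0∞} (h : A ≤ A1 + A2)
    (h' : ∀ i, B i ≤ B1 i + B2 i) :
    A + ∑ i, B i ≤ (A1 + ∑ i, B1 i) + (A2 + ∑ i, B2 i) := by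
  calc A + ∑ i, B i ≤ (A1 + A2) + ∑ i, (B1 i + B2 i) :=
        add_le_add h (Finset.sum_le_sum fun i _ => h' i)
    _ = _ := by rw [Finset.sum_add_distrib]; abel

theorem memAux_norm {ϑ : ℝ} {n : ℕ} {α : ℝ} {f : Pt d → ℝ} (h : memAux ϑ n α f) :
    hNormAux ϑ n α f ≠ ⊤ := by
  cases n with
  | zero => exact h
  | succ n =>
    rw [memAux] at h
    split_ifs at h with c1 c2 c3
    · exact h
    · exact h.2.2
    · exact h.2.2
    · exact h.2.2.2.2

theorem memAux_sub {ϑ : ℝ} : ∀ (n : ℕ) {α : ℝ} {f g : Pt d → ℝ},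
    memAux ϑ n α f → memAux ϑ n α g → memAux ϑ n α (fun z => f z - g z) ∧
      hNormAux ϑ n α (fun z => f z - g z) ≤ hNormAux ϑ n α f + hNormAux ϑ n α g := by
  intro n
  induction n with
  | zero =>
    intro α f g hf hg
    have h1 : hNormAux ϑ 0 α (fun z => f z - g z) ≤ hNormAux ϑ 0 α f + hNormAux ϑ 0 α g :=
      add_sum_le (semiY_sub _ _ _ _) fun i => semiZ_sub _ _ _ _
    exact ⟨ne_top_of_le_ne_top (ENNReal.add_ne_top.2 ⟨hf, hg⟩) h1, h1⟩
  | succ n ih =>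
    intro α f g hf hg
    have hfin := ENNReal.add_ne_top.2 ⟨memAux_norm hf, memAux_norm hg⟩
    suffices H : hNormAux ϑ (n + 1) α (fun z => f z - g z)
        ≤ hNormAux ϑ (n + 1) α f + hNormAux ϑ (n + 1) α g ∧
        (hNormAux ϑ (n + 1) α (fun z => f z - g z) ≠ ⊤ →
          memAux ϑ (n + 1) α (fun z => f z - g z)) from
      ⟨H.2 (ne_top_of_le_ne_top hfin H.1), H.1⟩
    clear hfin
    rw [memAux] at hf hg ⊢
    split_ifs at hf hg ⊢ with c1 c2 c3
    · refine ⟨?_, id⟩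
      simp only [hNormAux, if_pos c1]
      exact add_sum_le (semiY_sub _ _ _ _) fun i => semiZ_sub _ _ _ _
    · obtain ⟨hY, hYe⟩ := lieY_sub hf.1 hg.1
      have hi := ih hf.2.1 hg.2.1
      rw [← hYe] at hi
      refine ⟨?_, fun h => ⟨hY, hi.1, h⟩⟩
      simp only [hNormAux, if_neg c1, if_pos c2, if_pos c3]
      exact add_sum_le hi.2 fun i => semiZ_sub _ _ _ _
    · have hZ := fun i => dv_sub (hf.1 i) (hg.1 i)
      have hi := fun i => ih (hf.2.1 i) (hg.2.1 i)
      simp only [← (hZ _).2] at hi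
      refine ⟨?_, fun h => ⟨fun i => (hZ i).1, fun i => (hi i).1, h⟩⟩
      simp only [hNormAux, if_neg c1, if_pos c2, if_neg c3]
      exact add_sum_le (semiY_sub _ _ _ _) fun i => (hi i).2
    · obtain ⟨hY, hYe⟩ := lieY_sub hf.1 hg.1
      have hj := ih hf.2.1 hg.2.1
      rw [← hYe] at hj
      have hZ := fun i => dv_sub (hf.2.2.1 i) (hg.2.2.1 i)
      have hi := fun i => ih (hf.2.2.2.1 i) (hg.2.2.2.1 i)
      simp only [← (hZ _).2] at hi
      refine ⟨?_, fun h => ⟨hY, hj.1, fun i => (hZ i).1, fun i => (hi i).1, h⟩⟩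
      simp only [hNormAux, if_neg c1, if_neg c2]
      exact add_sum_le hj.2 fun i => (hi i).2

theorem fuel_indep {ϑ : ℝ} (hϑ : 0 < ϑ) : ∀ (n m : ℕ) {α : ℝ} (f : Pt d → ℝ),
    α ≤ (n + 1) * min 1 ϑ → α ≤ (m + 1) * min 1 ϑ →
    hNormAux ϑ n α f = hNormAux ϑ m α f ∧ (memAux ϑ n α f ↔ memAux ϑ m α f) := by
  have base : ∀ (m : ℕ) {α : ℝ} (f : Pt d → ℝ), α ≤ min 1 ϑ →
      hNormAux ϑ 0 α f = hNormAux ϑ m α f ∧ (memAux ϑ 0 α f ↔ memAux ϑ m α f) := by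
    intro m α f h
    cases m with
    | zero => exact ⟨rfl, Iff.rfl⟩
    | succ m =>
      have h1 : hNormAux ϑ 0 α f = hNormAux ϑ (m + 1) α f := by
        rw [hNormAux, hNormAux, if_pos h]
      refine ⟨h1, ?_⟩
      rw [memAux, memAux, if_pos h, h1]
  intro n
  induction n with
  | zero =>
    intro m α f h1 _
    exact base m f (by simpa using h1)
  | succ n ih =>
    intro m α f h1 h2
    cases m with
    | zero =>
      have := base (n + 1) f (by simpa using h2)
      exact ⟨this.1.symm, this.2.symm⟩
    | succ m =>
      push_cast at h1 h2
      have m1 := min_le_left 1 ϑ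
      have m2 := min_le_right 1 ϑ
      have hA : ∀ g : Pt d → ℝ, _ := fun g =>
        ih m (α := α - ϑ) g (by linarith) (by linarith)
      have hB : ∀ g : Pt d → ℝ, _ := fun g =>
        ih m (α := α - 1) g (by linarith) (by linarith)
      have hN : hNormAux ϑ (n + 1) α f = hNormAux ϑ (m + 1) α f := by
        simp only [hNormAux, (hA _).1, (hB _).1]
      refine ⟨hN, ?_⟩
      rw [memAux, memAux, hN]
      simp only [(hA _).2, (hB _).2]

/-- Existence of the position derivative as a commutator: if `α > 1 + ϑ` and `u ∈ C^α`, then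
for every `i` the difference quotients `(u(t, x+δeᵢ, v) − u(t,x,v))/δ` converge, as `δ → 0`,
to `[Z_i, Y]u(z) = Z_i(Yu)(z) − Y(Z_i u)(z)`; hence `∂_{x_i} u` exists everywhere and equals
`[Z_i, Y]u`; moreover `∂_{x_i} u ∈ C^{α − (ϑ+1)}`. -/
theorem position_derivative_as_commutator (d : ℕ) (hd : 1 ≤ d) (ϑ : ℝ) (hϑ : 0 < ϑ)
    (α : ℝ) (hα : 1 + ϑ < α) (u : Pt d → ℝ) (hu : IsHolder ϑ α u) (i : Fin d) :
    (∀ z : Pt d,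
      HasDerivAt (fun δ : ℝ => u (flowX (EuclideanSpace.single i 1) δ z))
        (dv i (lieY u) z - lieY (dv i u) z) 0) ∧
    (∀ z : Pt d, dx i u z = dv i (lieY u) z - lieY (dv i u) z) ∧
    IsHolder ϑ (α - (ϑ + 1)) (dx i u) := by
  have hm0 : 0 < min 1 ϑ := lt_min one_pos hϑ
  have hm1 := min_le_left 1 ϑ
  have hm2 := min_le_right 1 ϑ
  have hceil : α / min 1 ϑ ≤ (Nat.ceil (α / min 1 ϑ) : ℝ) := Nat.le_ceil _
  rw [div_le_iff₀ hm0] at hceil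
  obtain ⟨k, hk⟩ : ∃ k, Nat.ceil (α / min 1 ϑ) = k + 1 := by
    refine Nat.exists_eq_succ_of_ne_zero (Nat.ceil_pos.2 (div_pos (by linarith) hm0)).ne'
  rw [hk] at hceil
  push_cast at hceil
  have hu' : memAux ϑ (k + 1 + 1) α u := by
    rw [IsHolder, fuel, hk] at hu; exact hu
  have huc := memAux_continuous hϑ _ (by linarith) hu'
  have c1 : ¬ α ≤ min 1 ϑ := by intro h; linarith
  have c2 : ¬ α ≤ max 1 ϑ := by
    rw [le_max_iff]; rintro (h | h) <;> linarith
  rw [memAux, if_neg c1, if_neg c2] at hu'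
  obtain ⟨hY, hYm, hZ, hZm, -⟩ := hu'
  have hYc := memAux_continuous hϑ _ (by linarith) hYm
  have hZc := memAux_continuous hϑ _ (by linarith) (hZm i)
  have hW : (∀ z, HasLieAt (flowZ (EuclideanSpace.single i 1)) (lieY u) z) ∧
      memAux ϑ k (α - (ϑ + 1)) (dv i (lieY u)) := by
    have e1 : α - ϑ - 1 = α - (ϑ + 1) := by ring
    rw [memAux, if_neg (by intro h; linarith)] at hYm
    split_ifs at hYm with a1 a2
    · rw [max_eq_left a2.le] at a1; linarith
    · rw [e1] at hYm; exact ⟨hYm.1 i, hYm.2.1 i⟩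
    · rw [e1] at hYm; exact ⟨hYm.2.2.1 i, hYm.2.2.2.1 i⟩
  have hV : (∀ z, HasLieAt flowY (dv i u) z) ∧
      memAux ϑ k (α - (ϑ + 1)) (lieY (dv i u)) := by
    have e1 : α - 1 - ϑ = α - (ϑ + 1) := by ring
    have hZmi := hZm i
    rw [memAux, if_neg (by intro h; linarith)] at hZmi
    split_ifs at hZmi with a1 a2
    · rw [e1] at hZmi; exact ⟨hZmi.1, hZmi.2.1⟩
    · rw [max_eq_right (not_lt.1 a2)] at a1; linarith
    · rw [e1] at hZmi; exact ⟨hZmi.1, hZmi.2.1⟩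
  have hWc := memAux_continuous hϑ _ (by linarith) hW.2
  have hVc := memAux_continuous hϑ _ (by linarith) hV.2
  have main := commutator_deriv i huc hY hYc (hZ i) hZc hW.1 hWc hV.1 hVc
  have hdx : ∀ z : Pt d, dx i u z = dv i (lieY u) z - lieY (dv i u) z := fun z => (main z).deriv
  refine ⟨main, hdx, ?_⟩
  rw [funext hdx]
  have hsub := (memAux_sub k hW.2 hV.2).1
  refine (fuel_indep hϑ k _ _ ?_ ?_).2.1 hsub
  · linarith
  · have h3 : (α - (ϑ + 1)) / min 1 ϑ ≤ (Nat.ceil ((α - (ϑ + 1)) / min 1 ϑ) : ℝ) := Nat.le_ceil _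
    rw [div_le_iff₀ hm0] at h3
    rw [fuel]
    push_cast
    linarith

end
end

section
/- Commutation of mixed Euclidean derivatives: let α>0 and u∈C^α. For any multi-indices γ,β∈ℕ₀^d with 0 ≤ (1+ϑ)|γ| + |β| < α, the derivatives ∂_v^β ∂_x^γ u and ∂_x^γ ∂_v^β u both exist at every point of ℝ×ℝ^{2d}, are continuous on ℝ×ℝ^{2d}, and agree: ∂_v^β ∂_x^γ u = ∂_x^γ ∂_v^β u. -/
noncomputable section
open scoped BigOperators ENNReal

variable {d : ℕ}

open Set Filter Topology

/-- Mean value theorem for mixed second differences. -/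
theorem mixed_mvt {f f1 f12 : ℝ → ℝ → ℝ}
    (h1 : ∀ a b, HasDerivAt (fun a => f a b) (f1 a b) a)
    (h12 : ∀ a b, HasDerivAt (fun b => f1 a b) (f12 a b) b) {h : ℝ} (hh : 0 < h) :
    ∃ ξ ∈ Ioo 0 h, ∃ η ∈ Ioo 0 h, f h h - f h 0 - f 0 h + f 0 0 = h * h * f12 ξ η := by
  have hd : ∀ a, HasDerivAt (fun a => f a h - f a 0) (f1 a h - f1 a 0) a :=
    fun a => (h1 a h).sub (h1 a 0)
  obtain ⟨ξ, hξ, e1⟩ := exists_hasDerivAt_eq_slope (fun a => f a h - f a 0)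
    (fun a => f1 a h - f1 a 0) hh (fun a _ => (hd a).continuousAt.continuousWithinAt)
    (fun a _ => hd a)
  obtain ⟨η, hη, e2⟩ := exists_hasDerivAt_eq_slope (fun b => f1 ξ b)
    (fun b => f12 ξ b) hh (fun a _ => (h12 ξ a).continuousAt.continuousWithinAt)
    (fun a _ => h12 ξ a)
  refine ⟨ξ, hξ, η, hη, ?_⟩
  have hne : h ≠ 0 := hh.ne'
  simp only [sub_zero] at e1 e2
  rw [eq_div_iff hne] at e1 e2
  rw [← e2] at e1
  linarith

/-- Symmetry of mixed partial derivatives. -/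
theorem mixed_symm {f f1 f2 f12 f21 : ℝ → ℝ → ℝ}
    (h1 : ∀ a b, HasDerivAt (fun a => f a b) (f1 a b) a)
    (h12 : ∀ a b, HasDerivAt (fun b => f1 a b) (f12 a b) b)
    (h2 : ∀ a b, HasDerivAt (fun b => f a b) (f2 a b) b)
    (h21 : ∀ a b, HasDerivAt (fun a => f2 a b) (f21 a b) a)
    (c12 : Continuous (fun p : ℝ × ℝ => f12 p.1 p.2))
    (c21 : Continuous (fun p : ℝ × ℝ => f21 p.1 p.2)) : f12 0 0 = f21 0 0 := by
  have key : ∀ h : ℝ, ∃ p : (ℝ × ℝ) × (ℝ × ℝ), 0 < h → p.1.1 ∈ Ioo 0 h ∧ p.1.2 ∈ Ioo 0 h ∧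
      p.2.1 ∈ Ioo 0 h ∧ p.2.2 ∈ Ioo 0 h ∧ f12 p.1.1 p.1.2 = f21 p.2.1 p.2.2 := by
    intro h
    by_cases hh : 0 < h
    · obtain ⟨a, ha, b, hb, e⟩ := mixed_mvt h1 h12 hh
      obtain ⟨a', ha', b', hb', e'⟩ := mixed_mvt (f := fun a b => f b a) (f1 := fun a b => f2 b a)
        (f12 := fun a b => f21 b a) (fun a b => h2 b a) (fun a b => h21 b a) hh
      refine ⟨((a, b), (b', a')), fun _ => ⟨ha, hb, hb', ha', ?_⟩⟩
      have : h * h * f12 a b = h * h * f21 b' a' := by rw [← e, ← e']; ring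
      exact mul_left_cancel₀ (mul_pos hh hh).ne' this
    · exact ⟨0, fun h => absurd h hh⟩
  choose p hp using key
  have sq : ∀ g : ℝ → ℝ, (∀ h, 0 < h → g h ∈ Ioo 0 h) → Tendsto g (𝓝[>] 0) (𝓝 0) := by
    intro g hg
    refine tendsto_of_tendsto_of_tendsto_of_le_of_le' tendsto_const_nhds
      (tendsto_nhdsWithin_of_tendsto_nhds tendsto_id) ?_ ?_
    · filter_upwards [self_mem_nhdsWithin] with h hh using (hg h hh).1.le
    · filter_upwards [self_mem_nhdsWithin] with h hh using (hg h hh).2.le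
  have t1 : Tendsto (fun h => (p h).1) (𝓝[>] 0) (𝓝 (0, 0)) := by
    rw [nhds_prod_eq]
    exact (sq (fun h => (p h).1.1) fun h hh => (hp h hh).1).prodMk
      (sq (fun h => (p h).1.2) fun h hh => (hp h hh).2.1)
  have t2 : Tendsto (fun h => (p h).2) (𝓝[>] 0) (𝓝 (0, 0)) := by
    rw [nhds_prod_eq]
    exact (sq (fun h => (p h).2.1) fun h hh => (hp h hh).2.2.1).prodMk
      (sq (fun h => (p h).2.2) fun h hh => (hp h hh).2.2.2.1)
  have l1 := (c12.tendsto (0, 0)).comp t1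
  have l2 := (c21.tendsto (0, 0)).comp t2
  refine tendsto_nhds_unique (l1.congr' ?_) l2
  filter_upwards [self_mem_nhdsWithin] with h hh using (hp h hh).2.2.2.2

/-- Chain rule along a line from continuous partial derivatives. -/
theorem chain_two {g g1 g2 : ℝ → ℝ → ℝ}
    (h1 : ∀ a b, HasDerivAt (fun a => g a b) (g1 a b) a)
    (h2 : ∀ a b, HasDerivAt (fun b => g a b) (g2 a b) b)
    (c1 : Continuous (fun p : ℝ × ℝ => g1 p.1 p.2))
    (c2 : Continuous (fun p : ℝ × ℝ => g2 p.1 p.2)) (τ s : ℝ) :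
    HasDerivAt (fun s => g (τ * s) s) (τ * g1 (τ * s) s + g2 (τ * s) s) s := by
  have hS := hasStrictFDerivAt_uncurry_coprod (𝕜 := ℝ) (u := (τ * s, s)) (f := g)
    (f₁ := fun a b => ContinuousLinearMap.toSpanSingleton ℝ (g1 a b))
    (f₂ := fun a b => ContinuousLinearMap.toSpanSingleton ℝ (g2 a b))
    (Eventually.of_forall fun v => (h1 v.1 v.2).hasFDerivAt)
    (Eventually.of_forall fun v => (h2 v.1 v.2).hasFDerivAt)
    ((ContinuousLinearMap.toSpanSingletonCLE (𝕜 := ℝ) (E := ℝ)).continuous.comp c1).continuousAt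
    ((ContinuousLinearMap.toSpanSingletonCLE (𝕜 := ℝ) (E := ℝ)).continuous.comp c2).continuousAt
  have hl : HasDerivAt (fun s : ℝ => (τ * s, s)) (τ * 1, 1) s :=
    ((hasDerivAt_id s).const_mul τ).prodMk (hasDerivAt_id s)
  have := HasFDerivAt.comp_hasDerivAt (f := fun s : ℝ => (τ * s, s)) s hS.hasFDerivAt hl
  refine this.congr_deriv ?_
  simp [Function.HasUncurry.uncurry]

/-- A continuous one-parameter group of transformations. -/
structure IsFlow {P : Type*} [TopologicalSpace P] (φ : ℝ → P → P) : Prop where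
  zero : ∀ z, φ 0 z = z
  add : ∀ a b z, φ (a + b) z = φ a (φ b z)
  cont : Continuous (fun p : ℝ × P => φ p.1 p.2)

/-- The second function is the derivative of the first along the flow at every point. -/
def DerivAlong {P : Type*} (φ : ℝ → P → P) (g g' : P → ℝ) : Prop :=
  ∀ z, HasDerivAt (fun τ => g (φ τ z)) (g' z) 0

section flows
variable {P : Type*} [TopologicalSpace P]

theorem IsFlow.continuous_right {φ : ℝ → P → P} (hφ : IsFlow φ) (a : ℝ) : Continuous (φ a) :=
  hφ.cont.comp (continuous_const.prodMk continuous_id)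

theorem IsFlow.continuous_left {φ : ℝ → P → P} (hφ : IsFlow φ) (z : P) :
    Continuous (fun a => φ a z) :=
  hφ.cont.comp (continuous_id.prodMk continuous_const)

theorem DerivAlong.at {φ : ℝ → P → P} (hφ : IsFlow φ) {g g' : P → ℝ} (h : DerivAlong φ g g')
    (z : P) (τ : ℝ) : HasDerivAt (fun τ => g (φ τ z)) (g' (φ τ z)) τ := by
  have h0 := h (φ τ z)
  have h1 : HasDerivAt (fun σ => g (φ (σ - τ) (φ τ z))) (g' (φ τ z)) τ := by
    have := HasDerivAt.comp_sub_const τ τ (f := fun σ => g (φ σ (φ τ z))) (f' := g' (φ τ z))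
      (by simpa using h0)
    exact this
  refine h1.congr_of_eventuallyEq (Eventually.of_forall fun σ => ?_)
  simp only [← hφ.add, sub_add_cancel]

/-- Moving average of `g` along the flow `X`. -/
def avg (X : ℝ → P → P) (ε : ℝ) (g : P → ℝ) (z : P) : ℝ := ∫ a in (0 : ℝ)..ε, g (X a z)

theorem avg_continuous [FirstCountableTopology P] {X : ℝ → P → P} (hX : IsFlow X) (ε : ℝ)
    {g : P → ℝ} (hg : Continuous g) : Continuous (avg X ε g) := by
  unfold avg
  refine intervalIntegral.continuous_parametric_intervalIntegral_of_continuous'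
    (f := fun z a => g (X a z)) ?_ 0 ε
  exact hg.comp (hX.cont.comp continuous_swap)

theorem avg_derivAlong {X φ : ℝ → P → P} (hX : IsFlow X) (hφ : IsFlow φ)
    (hcomm : ∀ a b z, X a (φ b z) = φ b (X a z)) (ε : ℝ) {g g' : P → ℝ}
    (hg : Continuous g) (hg' : Continuous g') (h : DerivAlong φ g g') :
    DerivAlong φ (avg X ε g) (avg X ε g') := by
  intro z
  have hc' : Continuous (fun p : ℝ × ℝ => g' (X p.2 (φ p.1 z))) :=
    hg'.comp (hX.cont.comp (continuous_snd.prodMk ((hφ.continuous_left z).comp continuous_fst)))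
  have hc : Continuous (fun p : ℝ × ℝ => g (X p.2 (φ p.1 z))) :=
    hg.comp (hX.cont.comp (continuous_snd.prodMk ((hφ.continuous_left z).comp continuous_fst)))
  obtain ⟨C, hC⟩ := ((isCompact_Icc (a := (-1 : ℝ)) (b := 1)).prod
    (isCompact_uIcc (a := (0 : ℝ)) (b := ε))).exists_bound_of_continuousOn hc'.continuousOn
  have := (intervalIntegral.hasDerivAt_integral_of_dominated_loc_of_deriv_le
    (μ := MeasureTheory.volume) (a := 0) (b := ε) (x₀ := (0 : ℝ)) (s := Icc (-1) 1)
    (F := fun τ a => g (X a (φ τ z))) (F' := fun τ a => g' (X a (φ τ z))) (bound := fun _ => C)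
    (Icc_mem_nhds (by norm_num) (by norm_num))
    (Eventually.of_forall fun τ =>
      (hc.comp (continuous_const.prodMk continuous_id)).aestronglyMeasurable)
    ((hc.comp (continuous_const.prodMk continuous_id)).intervalIntegrable _ _)
    ((hc'.comp (continuous_const.prodMk continuous_id)).aestronglyMeasurable)
    (Eventually.of_forall fun a ha τ hτ => hC (τ, a) ⟨hτ, uIoc_subset_uIcc ha⟩)
    intervalIntegrable_const
    (Eventually.of_forall fun a _ τ _ => by
      have := h.at hφ (X a z) τ
      simpa only [hcomm] using this)).2
  simpa only [avg, hφ.zero] using this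

theorem avg_derivAlong_self {X : ℝ → P → P} (hX : IsFlow X) (ε : ℝ) {g : P → ℝ}
    (hg : Continuous g) : DerivAlong X (avg X ε g) (fun z => g (X ε z) - g z) := by
  intro z
  have hc : Continuous (fun a => g (X a z)) := hg.comp (hX.continuous_left z)
  have e : (fun τ => avg X ε g (X τ z)) =
      fun τ => (∫ a in (0 : ℝ)..(τ + ε), g (X a z)) - ∫ a in (0 : ℝ)..τ, g (X a z) := by
    funext τ
    rw [intervalIntegral.integral_interval_sub_left (hc.intervalIntegrable _ _)
      (hc.intervalIntegrable _ _)]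
    unfold avg
    simp only [← hX.add]
    rw [intervalIntegral.integral_comp_add_right (fun a => g (X a z))]
    simp [add_comm]
  rw [e]
  have d1 : HasDerivAt (fun τ => ∫ a in (0 : ℝ)..(τ + ε), g (X a z)) (g (X ε z)) 0 := by
    have h := intervalIntegral.integral_hasDerivAt_right (hc.intervalIntegrable 0 (0 + ε))
      (hc.stronglyMeasurableAtFilter _ _) hc.continuousAt
    have := h.comp_add_const 0 ε
    simpa using this
  have d2 : HasDerivAt (fun τ => ∫ a in (0 : ℝ)..τ, g (X a z)) (g z) 0 := by
    have h := intervalIntegral.integral_hasDerivAt_right (hc.intervalIntegrable 0 0)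
      (hc.stronglyMeasurableAtFilter _ _) hc.continuousAt
    simpa [hX.zero] using h
  exact d1.sub d2

/-- Derivative of the moving average along `s ↦ Y τ (Z s z)`. -/
theorem avg_cross [FirstCountableTopology P] {X Y Z : ℝ → P → P} (hX : IsFlow X)
    (hZ : IsFlow Z) (hXZ : ∀ a b z, X a (Z b z) = Z b (X a z))
    (hYZ : ∀ τ s z, Y τ (Z s z) = X (τ * s) (Z s (Y τ z))) (ε : ℝ) {g gZ : P → ℝ}
    (hg : Continuous g) (hgZ : Continuous gZ) (h : DerivAlong Z g gZ) (z : P) (τ s : ℝ) :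
    HasDerivAt (fun s => avg X ε g (Y τ (Z s z)))
      (τ * (g (X ε (Y τ (Z s z))) - g (Y τ (Z s z))) + avg X ε gZ (Y τ (Z s z))) s := by
  have hcp : Continuous (fun p : ℝ × ℝ => X p.1 (Z p.2 (Y τ z))) :=
    hX.cont.comp (continuous_fst.prodMk ((hZ.continuous_left _).comp continuous_snd))
  have := chain_two (g := fun a b => avg X ε g (X a (Z b (Y τ z))))
    (g1 := fun a b => g (X ε (X a (Z b (Y τ z)))) - g (X a (Z b (Y τ z))))
    (g2 := fun a b => avg X ε gZ (X a (Z b (Y τ z))))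
    (fun a b => (avg_derivAlong_self hX ε hg).at hX _ a)
    (fun a b => by
      simp only [hXZ]
      exact (avg_derivAlong hX hZ hXZ ε hg hgZ h).at hZ _ b)
    ((hg.comp ((hX.continuous_right ε).comp hcp)).sub (hg.comp hcp))
    ((avg_continuous hX ε hgZ).comp hcp) τ s
  simpa only [hYZ] using this

/-- The commutator identity `X = ZY - YZ`. -/
theorem commutator_deriv_s11 [FirstCountableTopology P] {X Y Z : ℝ → P → P} (hX : IsFlow X)
    (hY : IsFlow Y) (hZ : IsFlow Z)
    (hXY : ∀ a b z, X a (Y b z) = Y b (X a z))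
    (hXZ : ∀ a b z, X a (Z b z) = Z b (X a z))
    (hYZ : ∀ τ s z, Y τ (Z s z) = X (τ * s) (Z s (Y τ z)))
    {u uY uZ uYZ uZY : P → ℝ} (cu : Continuous u) (cY : Continuous uY) (cZ : Continuous uZ)
    (cYZ : Continuous uYZ) (cZY : Continuous uZY)
    (dY : DerivAlong Y u uY) (dZ : DerivAlong Z u uZ)
    (dYZ : DerivAlong Z uY uYZ) (dZY : DerivAlong Y uZ uZY) :
    DerivAlong X u (fun z => uYZ z - uZY z) := by
  intro z
  have key : ∀ ε, u (X ε z) - u z = ∫ a in (0 : ℝ)..ε, (uYZ (X a z) - uZY (X a z)) := by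
    intro ε
    have hp : Continuous (fun p : ℝ × ℝ => Y p.1 (Z p.2 z)) :=
      hY.cont.comp (continuous_fst.prodMk ((hZ.continuous_left z).comp continuous_snd))
    have hε := hX.continuous_right ε
    have e := mixed_symm (f := fun τ s => avg X ε u (Y τ (Z s z)))
      (f1 := fun τ s => avg X ε uY (Y τ (Z s z)))
      (f2 := fun τ s => τ * (u (X ε (Y τ (Z s z))) - u (Y τ (Z s z))) + avg X ε uZ (Y τ (Z s z)))
      (f12 := fun τ s => τ * (uY (X ε (Y τ (Z s z))) - uY (Y τ (Z s z)))
        + avg X ε uYZ (Y τ (Z s z)))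
      (f21 := fun τ s => (1 * (u (X ε (Y τ (Z s z))) - u (Y τ (Z s z)))
        + τ * (uY (X ε (Y τ (Z s z))) - uY (Y τ (Z s z)))) + avg X ε uZY (Y τ (Z s z)))
      (fun τ s => (avg_derivAlong hX hY hXY ε cu cY dY).at hY _ τ)
      (fun τ s => avg_cross hX hZ hXZ hYZ ε cY cYZ dYZ z τ s)
      (fun τ s => avg_cross hX hZ hXZ hYZ ε cu cZ dZ z τ s)
      (fun τ s => by
        refine ((hasDerivAt_id τ).mul (HasDerivAt.sub ?_ (dY.at hY _ τ))).add
          ((avg_derivAlong hX hY hXY ε cZ cZY dZY).at hY _ τ)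
        simp only [hXY]
        exact dY.at hY _ τ)
      ((continuous_fst.mul ((cY.comp (hε.comp hp)).sub (cY.comp hp))).add
        ((avg_continuous hX ε cYZ).comp hp))
      (((continuous_const.mul ((cu.comp (hε.comp hp)).sub (cu.comp hp))).add
        (continuous_fst.mul ((cY.comp (hε.comp hp)).sub (cY.comp hp)))).add
        ((avg_continuous hX ε cZY).comp hp))
    simp only [hY.zero, hZ.zero, zero_mul, one_mul, zero_add, add_zero] at e
    rw [intervalIntegral.integral_sub]
    · simp only [avg] at e
      linarith
    · exact (cYZ.comp (hX.continuous_left z)).intervalIntegrable _ _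
    · exact (cZY.comp (hX.continuous_left z)).intervalIntegrable _ _
  have hc : Continuous (fun a => uYZ (X a z) - uZY (X a z)) :=
    (cYZ.comp (hX.continuous_left z)).sub (cZY.comp (hX.continuous_left z))
  have h := intervalIntegral.integral_hasDerivAt_right (hc.intervalIntegrable 0 0)
      (hc.stronglyMeasurableAtFilter _ _) hc.continuousAt
  simp only [hX.zero] at h
  have h2 := h.add_const (u z)
  refine h2.congr_of_eventuallyEq (Eventually.of_forall fun ε => ?_)
  simp only
  rw [← key ε]; ring

/-- Commuting flows have commuting derivatives. -/
theorem commute_deriv {X Z : ℝ → P → P} (hX : IsFlow X) (hZ : IsFlow Z)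
    (hXZ : ∀ a b z, X a (Z b z) = Z b (X a z)) {u uX uZ uXZ uZX : P → ℝ}
    (cXZ : Continuous uXZ) (cZX : Continuous uZX)
    (dX : DerivAlong X u uX) (dZ : DerivAlong Z u uZ)
    (dXZ : DerivAlong Z uX uXZ) (dZX : DerivAlong X uZ uZX) (z : P) : uXZ z = uZX z := by
  have hp : Continuous (fun p : ℝ × ℝ => X p.1 (Z p.2 z)) :=
    hX.cont.comp (continuous_fst.prodMk ((hZ.continuous_left z).comp continuous_snd))
  have e := mixed_symm (f := fun a s => u (X a (Z s z))) (f1 := fun a s => uX (X a (Z s z)))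
    (f2 := fun a s => uZ (X a (Z s z))) (f12 := fun a s => uXZ (X a (Z s z)))
    (f21 := fun a s => uZX (X a (Z s z)))
    (fun a s => dX.at hX _ a)
    (fun a s => by simp only [hXZ]; exact dXZ.at hZ _ s)
    (fun a s => by simp only [hXZ]; exact dZ.at hZ _ s)
    (fun a s => dZX.at hX _ a) (cXZ.comp hp) (cZX.comp hp)
  simpa only [hX.zero, hZ.zero] using e

end flows

/-- `u` varies little along the flow, locally uniformly. -/
def LUC {P : Type*} [TopologicalSpace P] (φ : ℝ → P → P) (u : P → ℝ) : Prop :=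
  ∀ z₀, Tendsto (fun p : ℝ × P => u (φ p.1 p.2) - u p.2) (𝓝 (0, z₀)) (𝓝 0)

theorem luc_of_deriv {P : Type*} [TopologicalSpace P] {φ : ℝ → P → P} (hφ : IsFlow φ)
    {u u' : P → ℝ} (h : DerivAlong φ u u') (hc : Continuous u') : LUC φ u := by
  intro z₀
  have hcont : Continuous (fun p : ℝ × P => ‖u' (φ p.1 p.2)‖) := (hc.comp hφ.cont).norm
  have hev : ∀ᶠ p : ℝ × P in 𝓝 (0, z₀), ‖u' (φ p.1 p.2)‖ < ‖u' z₀‖ + 1 := by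
    refine hcont.continuousAt.eventually_lt continuousAt_const ?_
    simp [hφ.zero]
  rw [nhds_prod_eq] at hev
  obtain ⟨A, hA, B, hB, hAB⟩ := eventually_prod_iff.1 hev
  obtain ⟨δ, hδ, hδA⟩ := Metric.eventually_nhds_iff_ball.1 hA
  have hbd : ∀ᶠ p : ℝ × P in 𝓝 (0, z₀),
      ‖u (φ p.1 p.2) - u p.2‖ ≤ (‖u' z₀‖ + 1) * ‖p.1‖ := by
    rw [nhds_prod_eq]
    have hball : ∀ᶠ τ : ℝ in 𝓝 0, τ ∈ Metric.ball (0 : ℝ) δ := Metric.ball_mem_nhds 0 hδ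
    filter_upwards [hball.prod_inl (𝓝 z₀), hB.prod_inr (𝓝 (0 : ℝ))] with p hp1 hp2
    have := (convex_ball (0 : ℝ) δ).norm_image_sub_le_of_norm_hasDerivWithin_le
      (f := fun τ => u (φ τ p.2)) (f' := fun τ => u' (φ τ p.2)) (C := ‖u' z₀‖ + 1)
      (fun τ _ => (h.at hφ p.2 τ).hasDerivWithinAt)
      (fun τ hτ => (hAB (hδA τ hτ) hp2).le) (Metric.mem_ball_self hδ) hp1
    simpa [hφ.zero] using this
  refine squeeze_zero_norm' hbd ?_
  have : Continuous (fun p : ℝ × P => (‖u' z₀‖ + 1) * ‖p.1‖) := by fun_prop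
  simpa using this.tendsto (0, z₀)

theorem luc_of_semi {P : Type*} [TopologicalSpace P] {φ : ℝ → P → P} (hφ : IsFlow φ)
    {u : P → ℝ} {a : ℝ} (ha : 0 < a)
    (h : (⨆ (z : P) (τ : ℝ) (_ : τ ≠ 0),
      ENNReal.ofReal (|u (φ τ z) - u z| / |τ| ^ a)) ≠ ⊤) : LUC φ u := by
  set S := (⨆ (z : P) (τ : ℝ) (_ : τ ≠ 0), ENNReal.ofReal (|u (φ τ z) - u z| / |τ| ^ a)) with hS
  have hb : ∀ p : ℝ × P, ‖u (φ p.1 p.2) - u p.2‖ ≤ S.toReal * |p.1| ^ a := by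
    rintro ⟨τ, z⟩
    by_cases hτ : τ = 0
    · subst hτ
      simp [hφ.zero, Real.zero_rpow ha.ne']
    · have hle : ENNReal.ofReal (|u (φ τ z) - u z| / |τ| ^ a) ≤ S := by
        rw [hS]
        exact le_iSup_of_le z (le_iSup_of_le τ (le_iSup_of_le hτ le_rfl))
      have h2 := (ENNReal.ofReal_le_iff_le_toReal h).1 hle
      have hpos : 0 < |τ| ^ a := Real.rpow_pos_of_pos (abs_pos.2 hτ) a
      rw [div_le_iff₀ hpos] at h2
      simpa [Real.norm_eq_abs] using h2
  intro z₀
  refine squeeze_zero_norm hb ?_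
  have : Continuous (fun p : ℝ × P => S.toReal * |p.1| ^ a) :=
    continuous_const.mul ((continuous_abs.comp continuous_fst).rpow_const fun _ => Or.inr ha.le)
  simpa [Real.zero_rpow ha.ne'] using this.tendsto (0, z₀)

theorem isFlow_flowY : IsFlow (flowY (d := d)) where
  zero z := by simp [flowY]
  add a b z := by
    refine Prod.ext ?_ (Prod.ext ?_ rfl)
    · simp only [flowY]; ring
    · simp only [flowY]; module
  cont := by unfold flowY; fun_prop

theorem isFlow_flowZ (h : EuclideanSpace ℝ (Fin d)) : IsFlow (flowZ h) where
  zero z := by simp [flowZ]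
  add a b z := by
    refine Prod.ext rfl (Prod.ext rfl ?_)
    simp only [flowZ]; module
  cont := by unfold flowZ; fun_prop

theorem isFlow_flowX (h : EuclideanSpace ℝ (Fin d)) : IsFlow (flowX h) where
  zero z := by simp [flowX]
  add a b z := by
    refine Prod.ext rfl (Prod.ext ?_ rfl)
    simp only [flowX]; module
  cont := by unfold flowX; fun_prop

theorem flowX_flowY (h : EuclideanSpace ℝ (Fin d)) (a b : ℝ) (z : Pt d) :
    flowX h a (flowY b z) = flowY b (flowX h a z) := by
  refine Prod.ext rfl (Prod.ext ?_ rfl)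
  simp only [flowX, flowY]; module

theorem flowX_flowZ (h k : EuclideanSpace ℝ (Fin d)) (a b : ℝ) (z : Pt d) :
    flowX h a (flowZ k b z) = flowZ k b (flowX h a z) := rfl

theorem flowY_flowZ (h : EuclideanSpace ℝ (Fin d)) (τ s : ℝ) (z : Pt d) :
    flowY τ (flowZ h s z) = flowX h (τ * s) (flowZ h s (flowY τ z)) := by
  refine Prod.ext rfl (Prod.ext ?_ rfl)
  simp only [flowX, flowY, flowZ]; module

/-- The commutator loop. -/
theorem flow_loop (h : EuclideanSpace ℝ (Fin d)) (τ s : ℝ) (z : Pt d) :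
    flowY (-τ) (flowZ h (-s) (flowY τ (flowZ h s z))) = flowX h (τ * s) z := by
  refine Prod.ext ?_ (Prod.ext ?_ ?_)
  · simp only [flowX, flowY, flowZ]; ring
  · simp only [flowX, flowY, flowZ]; module
  · simp only [flowX, flowY, flowZ]; module

/-- A family of points tending to `z₀` along which `u` tends to `u z₀`. -/
def Good (u : Pt d → ℝ) (z₀ : Pt d) (p : Pt d → Pt d) : Prop :=
  Tendsto p (𝓝 z₀) (𝓝 z₀) ∧ Tendsto (fun z => u (p z)) (𝓝 z₀) (𝓝 (u z₀))

theorem Good.flow {u : Pt d → ℝ} {z₀ : Pt d} {p : Pt d → Pt d} (hp : Good u z₀ p)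
    {φ : ℝ → Pt d → Pt d} (hφ : IsFlow φ) (hu : LUC φ u) {τ : Pt d → ℝ}
    (hτ : Tendsto τ (𝓝 z₀) (𝓝 0)) : Good u z₀ (fun z => φ (τ z) (p z)) := by
  have hpair : Tendsto (fun z => (τ z, p z)) (𝓝 z₀) (𝓝 ((0 : ℝ), z₀)) :=
    hτ.prodMk_nhds hp.1
  constructor
  · have := (hφ.cont.tendsto ((0 : ℝ), z₀)).comp hpair
    simpa [hφ.zero, Function.comp_def] using this
  · have := ((hu z₀).comp hpair).add hp.2
    simpa [Function.comp_def] using this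

theorem Good.flowX {u : Pt d → ℝ} {z₀ : Pt d} {p : Pt d → Pt d} (hp : Good u z₀ p)
    (h : EuclideanSpace ℝ (Fin d)) (hY : LUC flowY u) (hZ : LUC (flowZ h) u) {c : Pt d → ℝ}
    (hc : Tendsto c (𝓝 z₀) (𝓝 0)) : Good u z₀ (fun z => flowX h (c z) (p z)) := by
  have hs : Tendsto (fun z => Real.sqrt |c z|) (𝓝 z₀) (𝓝 0) := by
    have h1 : Continuous (fun r : ℝ => Real.sqrt |r|) := by fun_prop
    simpa [Function.comp_def] using (h1.tendsto 0).comp hc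
  have ht : Tendsto (fun z => SignType.sign (c z) * Real.sqrt |c z|) (𝓝 z₀) (𝓝 0) := by
    refine squeeze_zero_norm (fun z => ?_) hs
    rw [norm_mul, Real.norm_of_nonneg (Real.sqrt_nonneg _)]
    refine mul_le_of_le_one_left (Real.sqrt_nonneg _) ?_
    rcases lt_trichotomy (c z) 0 with h | h | h <;> simp [h]
  have key := (((hp.flow (isFlow_flowZ h) hZ hs).flow isFlow_flowY hY ht).flow
    (isFlow_flowZ h) hZ (by simpa using hs.neg)).flow isFlow_flowY hY (by simpa using ht.neg)
  simp only [flow_loop] at key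
  convert key using 3 with z
  rw [mul_assoc, Real.mul_self_sqrt (abs_nonneg _), sign_mul_abs]

theorem continuous_of_luc {u : Pt d → ℝ} (hY : LUC flowY u)
    (hZ : ∀ i : Fin d, LUC (flowZ (EuclideanSpace.single i 1)) u) : Continuous u := by
  rw [continuous_iff_continuousAt]
  intro z₀
  have h0 : Good u z₀ (fun _ => z₀) := ⟨tendsto_const_nhds, tendsto_const_nhds⟩
  have ht : Tendsto (fun z : Pt d => z.1 - z₀.1) (𝓝 z₀) (𝓝 0) := by
    have : Continuous (fun z : Pt d => z.1 - z₀.1) := by fun_prop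
    simpa using this.tendsto z₀
  have h1 := h0.flow isFlow_flowY hY ht
  have h2 : ∀ S : Finset (Fin d), Good u z₀ (fun z => (z.1, z₀.2.1 + (z.1 - z₀.1) • z₀.2.2,
      z₀.2.2 + ∑ i ∈ S, (z.2.2 i - z₀.2.2 i) • EuclideanSpace.single i (1 : ℝ))) := by
    intro S
    induction S using Finset.induction_on with
    | empty => simpa [flowY] using h1
    | insert i S hi ih =>
      have hv : Tendsto (fun z : Pt d => z.2.2 i - z₀.2.2 i) (𝓝 z₀) (𝓝 0) := by
        have : Continuous (fun z : Pt d => z.2.2 i - z₀.2.2 i) := by fun_prop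
        simpa using this.tendsto z₀
      have := ih.flow (isFlow_flowZ _) (hZ i) hv
      convert this using 2 with z
      simp only [flowZ, Finset.sum_insert hi]
      refine Prod.ext rfl (Prod.ext rfl ?_)
      simp only
      abel
  have hsum : ∀ w : EuclideanSpace ℝ (Fin d), ∑ i, w i • EuclideanSpace.single i (1 : ℝ) = w := by
    intro w
    ext j
    simp [Pi.single_apply]
  have h3 : ∀ S : Finset (Fin d), Good u z₀ (fun z => (z.1, z₀.2.1 + (z.1 - z₀.1) • z₀.2.2 +
      ∑ i ∈ S, (z.2.1 - (z₀.2.1 + (z.1 - z₀.1) • z₀.2.2)) i • EuclideanSpace.single i (1 : ℝ),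
      z.2.2)) := by
    intro S
    induction S using Finset.induction_on with
    | empty =>
      have := h2 Finset.univ
      have e : ∀ z : Pt d, z₀.2.2 + ∑ i, (z.2.2 i - z₀.2.2 i) • EuclideanSpace.single i (1 : ℝ)
          = z.2.2 := by
        intro z
        have := hsum (z.2.2 - z₀.2.2)
        simp only [PiLp.sub_apply] at this
        rw [this]; abel
      simpa [e] using this
    | insert i S hi ih =>
      have hv : Tendsto (fun z : Pt d => (z.2.1 - (z₀.2.1 + (z.1 - z₀.1) • z₀.2.2)) i)
          (𝓝 z₀) (𝓝 0) := by
        have : Continuous (fun z : Pt d => (z.2.1 - (z₀.2.1 + (z.1 - z₀.1) • z₀.2.2)) i) := by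
          fun_prop
        simpa using this.tendsto z₀
      have := ih.flowX _ hY (hZ i) hv
      convert this using 2 with z
      simp only [_root_.flowX, Finset.sum_insert hi]
      refine Prod.ext rfl (Prod.ext ?_ rfl)
      simp only
      abel
  have h4 := (h3 Finset.univ).2
  simp only [hsum, add_sub_cancel] at h4
  exact h4

/-- The part of membership in `C^α` that matters for continuity of derivatives. -/
inductive Reg (ϑ : ℝ) : ℝ → (Pt d → ℝ) → Prop
  | mk (α : ℝ) (u : Pt d → ℝ) (hc : Continuous u)
      (hY : ϑ < α → ∀ z, HasLieAt flowY u z) (hY' : ϑ < α → Reg ϑ (α - ϑ) (lieY u))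
      (hZ : 1 < α → ∀ (i : Fin d) (z : Pt d), HasLieAt (flowZ (EuclideanSpace.single i 1)) u z)
      (hZ' : 1 < α → ∀ i : Fin d, Reg ϑ (α - 1) (dv i u)) : Reg ϑ α u

theorem Reg.continuous {ϑ α : ℝ} {u : Pt d → ℝ} (h : Reg ϑ α u) : Continuous u := by
  cases h; assumption

theorem Reg.lieY {ϑ α : ℝ} {u : Pt d → ℝ} (h : Reg ϑ α u) (hα : ϑ < α) :
    DerivAlong flowY u (lieY u) ∧ Reg ϑ (α - ϑ) (lieY u) := by
  cases h with
  | mk _ _ hc hY hY' hZ hZ' => exact ⟨fun z => (hY hα z).hasDerivAt, hY' hα⟩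

theorem Reg.dv {ϑ α : ℝ} {u : Pt d → ℝ} (h : Reg ϑ α u) (hα : 1 < α) (i : Fin d) :
    DerivAlong (flowZ (EuclideanSpace.single i 1)) u (dv i u) ∧ Reg ϑ (α - 1) (dv i u) := by
  cases h with
  | mk _ _ hc hY hY' hZ hZ' => exact ⟨fun z => (hZ hα i z).hasDerivAt, hZ' hα i⟩

theorem Reg.sub {ϑ α : ℝ} {u w : Pt d → ℝ} (hu : Reg ϑ α u) (hw : Reg ϑ α w) :
    Reg ϑ α (fun z => u z - w z) := by
  induction hu generalizing w with
  | mk α u hc hY hY' hZ hZ' ihY ihZ =>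
    refine Reg.mk _ _ (hc.sub hw.continuous) (fun h z => ?_) (fun h => ?_) (fun h i z => ?_)
      (fun h i => ?_)
    · exact (hY h z).sub ((hw.lieY h).1 z).differentiableAt
    · have e : _root_.lieY (fun z => u z - w z) = fun z => _root_.lieY u z - _root_.lieY w z := by
        funext z
        exact ((hY h z).hasDerivAt.sub ((hw.lieY h).1 z)).deriv
      rw [e]
      exact ihY h (hw.lieY h).2
    · exact (hZ h i z).sub ((hw.dv h i).1 z).differentiableAt
    · have e : _root_.dv i (fun z => u z - w z) = fun z => _root_.dv i u z - _root_.dv i w z := by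
        funext z
        exact ((hZ h i z).hasDerivAt.sub ((hw.dv h i).1 z)).deriv
      rw [e]
      exact ihZ h i (hw.dv h i).2

theorem Reg.dx {ϑ α : ℝ} (hϑ : 0 < ϑ) {u : Pt d → ℝ} (h : Reg ϑ α u) (hα : 1 + ϑ < α)
    (i : Fin d) :
    DerivAlong (flowX (EuclideanSpace.single i 1)) u (dx i u) ∧
      Reg ϑ (α - (1 + ϑ)) (dx i u) := by
  obtain ⟨dY, rY⟩ := h.lieY (by linarith)
  obtain ⟨dZ, rZ⟩ := h.dv (by linarith) i
  obtain ⟨dYZ, rYZ⟩ := rY.dv (by linarith) i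
  obtain ⟨dZY, rZY⟩ := rZ.lieY (by linarith)
  have key := commutator_deriv_s11 (isFlow_flowX (EuclideanSpace.single i 1)) isFlow_flowY
    (isFlow_flowZ (EuclideanSpace.single i 1)) (flowX_flowY _) (flowX_flowZ _ _) (flowY_flowZ _)
    h.continuous rY.continuous rZ.continuous rYZ.continuous rZY.continuous dY dZ dYZ dZY
  have e : _root_.dx i u = fun z => _root_.dv i (_root_.lieY u) z
      - _root_.lieY (_root_.dv i u) z := by
    funext z
    exact (key z).deriv
  rw [e]
  refine ⟨key, Reg.sub ?_ ?_⟩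
  · convert rYZ using 1; ring
  · convert rZY using 1; ring

theorem luc_semiY {ϑ α : ℝ} (hϑ : 0 < ϑ) (hα : 0 < α) {u : Pt d → ℝ} (h : semiY ϑ α u ≠ ⊤) :
    LUC flowY u := luc_of_semi isFlow_flowY (div_pos hα hϑ) h

theorem luc_semiZ {α : ℝ} (hα : 0 < α) {u : Pt d → ℝ} (h : ∑ i, semiZ i α u ≠ ⊤) (i : Fin d) :
    LUC (flowZ (EuclideanSpace.single i 1)) u :=
  luc_of_semi (isFlow_flowZ _) hα ((ENNReal.sum_ne_top.1 h) i (Finset.mem_univ i))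

theorem luc_lieY {u : Pt d → ℝ} (h : ∀ z, HasLieAt flowY u z) (hc : Continuous (lieY u)) :
    LUC flowY u := luc_of_deriv isFlow_flowY (fun z => (h z).hasDerivAt) hc

theorem luc_dv {u : Pt d → ℝ} {i : Fin d}
    (h : ∀ z, HasLieAt (flowZ (EuclideanSpace.single i 1)) u z) (hc : Continuous (dv i u)) :
    LUC (flowZ (EuclideanSpace.single i 1)) u :=
  luc_of_deriv (isFlow_flowZ _) (fun z => (h z).hasDerivAt) hc

theorem reg_base {ϑ α : ℝ} (hϑ : 0 < ϑ) (hα : 0 < α) {u : Pt d → ℝ} (hm : α ≤ min 1 ϑ)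
    (h : semiY ϑ α u + ∑ i, semiZ i α u ≠ ⊤) : Reg ϑ α u := by
  rw [ENNReal.add_ne_top] at h
  obtain ⟨h1, h2⟩ := le_min_iff.1 hm
  exact Reg.mk _ _ (continuous_of_luc (luc_semiY hϑ hα h.1) (luc_semiZ hα h.2))
    (fun h => absurd h (not_lt.2 h2)) (fun h => absurd h (not_lt.2 h2))
    (fun h => absurd h (not_lt.2 h1)) (fun h => absurd h (not_lt.2 h1))

theorem reg_of_memAux {ϑ : ℝ} (hϑ : 0 < ϑ) (n : ℕ) : ∀ (α : ℝ) (u : Pt d → ℝ), 0 < α →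
    α ≤ (n + 1) * min 1 ϑ → memAux ϑ n α u → Reg ϑ α u := by
  induction n with
  | zero =>
    intro α u hα hm h
    simp only [memAux, hNormAux] at h
    exact reg_base hϑ hα (by simpa using hm) h
  | succ n ih =>
    intro α u hα hm h
    push_cast at hm
    have hm1 : min 1 ϑ ≤ 1 := min_le_left _ _
    have hm2 : min 1 ϑ ≤ ϑ := min_le_right _ _
    have hb1 : α - ϑ ≤ (n + 1) * min 1 ϑ := by nlinarith
    have hb2 : α - 1 ≤ (n + 1) * min 1 ϑ := by nlinarith
    rw [memAux] at h
    split_ifs at h with c1 c2 c3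
    · rw [hNormAux, if_pos c1] at h
      exact reg_base hϑ hα c1 h
    · obtain ⟨hY, hm, hN⟩ := h
      rw [hNormAux, if_neg c1, if_pos c2, if_pos c3, ENNReal.add_ne_top] at hN
      rw [min_eq_right c3.le, not_le] at c1
      rw [max_eq_left c3.le] at c2
      have r := ih _ _ (by linarith) hb1 hm
      exact Reg.mk _ _ (continuous_of_luc (luc_lieY hY r.continuous) (luc_semiZ hα hN.2))
        (fun _ => hY) (fun _ => r) (fun h => absurd h (not_lt.2 c2))
        (fun h => absurd h (not_lt.2 c2))
    · obtain ⟨hZ, hm, hN⟩ := h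
      rw [hNormAux, if_neg c1, if_pos c2, if_neg c3, ENNReal.add_ne_top] at hN
      rw [not_lt] at c3
      rw [min_eq_left c3, not_le] at c1
      rw [max_eq_right c3] at c2
      have r := fun i => ih _ _ (by linarith) hb2 (hm i)
      exact Reg.mk _ _ (continuous_of_luc (luc_semiY hϑ hα hN.1)
        fun i => luc_dv (hZ i) (r i).continuous)
        (fun h => absurd h (not_lt.2 c2)) (fun h => absurd h (not_lt.2 c2))
        (fun _ => hZ) (fun _ => r)
    · obtain ⟨hY, hmY, hZ, hm, -⟩ := h
      rw [not_le, max_lt_iff] at c2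
      have rY := ih _ _ (by linarith) hb1 hmY
      have r := fun i => ih _ _ (by linarith) hb2 (hm i)
      exact Reg.mk _ _ (continuous_of_luc (luc_lieY hY rY.continuous)
        fun i => luc_dv (hZ i) (r i).continuous)
        (fun _ => hY) (fun _ => rY) (fun _ => hZ) (fun _ => r)

theorem reg_of_isHolder {ϑ α : ℝ} (hϑ : 0 < ϑ) (hα : 0 < α) {u : Pt d → ℝ}
    (h : IsHolder ϑ α u) : Reg ϑ α u := by
  refine reg_of_memAux hϑ _ α u hα ?_ h
  have hm : 0 < min 1 ϑ := lt_min one_pos hϑ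
  rw [← div_le_iff₀ hm]
  have := Nat.le_ceil (α / min 1 ϑ)
  unfold fuel
  push_cast
  linarith

theorem reg_dxList {ϑ α : ℝ} (hϑ : 0 < ϑ) {u : Pt d → ℝ} (h : Reg ϑ α u) (l : List (Fin d))
    (hl : (1 + ϑ) * l.length < α) :
    ExistsDList (fun i => flowX (EuclideanSpace.single i 1)) dx l u ∧
      Reg ϑ (α - (1 + ϑ) * l.length) (derivList dx l u) := by
  induction l with
  | nil => exact ⟨trivial, by simpa [derivList] using h⟩
  | cons i l ih =>
    simp only [List.length_cons, Nat.cast_add, Nat.cast_one] at hl ⊢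
    obtain ⟨e, r⟩ := ih (by nlinarith)
    obtain ⟨d1, r1⟩ := r.dx hϑ (by linarith) i
    refine ⟨⟨e, fun z => (d1 z).differentiableAt⟩, ?_⟩
    convert r1 using 1
    · ring
    · rfl

theorem reg_dvList {ϑ α : ℝ} {u : Pt d → ℝ} (h : Reg ϑ α u) (l : List (Fin d))
    (hl : (l.length : ℝ) < α) :
    ExistsDList (fun i => flowZ (EuclideanSpace.single i 1)) dv l u ∧
      Reg ϑ (α - l.length) (derivList dv l u) := by
  induction l with
  | nil => exact ⟨trivial, by simpa [derivList] using h⟩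
  | cons i l ih =>
    simp only [List.length_cons, Nat.cast_add, Nat.cast_one] at hl ⊢
    obtain ⟨e, r⟩ := ih (by linarith)
    obtain ⟨d1, r1⟩ := r.dv (by linarith) i
    refine ⟨⟨e, fun z => (d1 z).differentiableAt⟩, ?_⟩
    convert r1 using 1
    · ring
    · rfl

theorem dv_dx_comm {ϑ α : ℝ} (hϑ : 0 < ϑ) {u : Pt d → ℝ} (h : Reg ϑ α u)
    (hα : 1 + ϑ + 1 < α) (i j : Fin d) : dv i (dx j u) = dx j (dv i u) := by
  obtain ⟨dX, rX⟩ := h.dx hϑ (by linarith) j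
  obtain ⟨dZ, rZ⟩ := h.dv (by linarith) i
  obtain ⟨dXZ, rXZ⟩ := rX.dv (by linarith) i
  obtain ⟨dZX, rZX⟩ := rZ.dx hϑ (by linarith) j
  funext z
  exact commute_deriv (isFlow_flowX _) (isFlow_flowZ _) (flowX_flowZ _ _)
    rXZ.continuous rZX.continuous dX dZ dXZ dZX z

theorem dv_dxList_comm {ϑ α : ℝ} (hϑ : 0 < ϑ) {u : Pt d → ℝ} (h : Reg ϑ α u) (i : Fin d)
    (l : List (Fin d)) (hl : (1 + ϑ) * l.length + 1 < α) :
    dv i (derivList dx l u) = derivList dx l (dv i u) := by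
  induction l with
  | nil => rfl
  | cons j l ih =>
    simp only [List.length_cons, Nat.cast_add, Nat.cast_one] at hl
    have r := (reg_dxList hϑ h l (by linarith)).2
    simp only [derivList]
    rw [dv_dx_comm hϑ r (by linarith), ih (by linarith)]

theorem dvList_dxList_comm {ϑ α : ℝ} (hϑ : 0 < ϑ) {u : Pt d → ℝ} (h : Reg ϑ α u)
    (l m : List (Fin d)) (hl : (1 + ϑ) * l.length + m.length < α) :
    derivList dv m (derivList dx l u) = derivList dx l (derivList dv m u) := by
  induction m with
  | nil => rfl
  | cons i m ih =>
    simp only [List.length_cons, Nat.cast_add, Nat.cast_one] at hl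
    have hnn : 0 ≤ (1 + ϑ) * (l.length : ℝ) := by positivity
    have r := (reg_dvList h m (by linarith)).2
    simp only [derivList]
    rw [ih (by linarith), dv_dxList_comm hϑ r i l (by linarith)]

theorem length_idxList (β : Fin d → ℕ) : (idxList β).length = ∑ i, β i := by
  simp [idxList, List.length_flatten, List.map_ofFn, List.sum_ofFn, Function.comp_def]

/-- Commutation of mixed Euclidean derivatives: if `u ∈ C^α` and `(1+ϑ)|γ| + |β| < α`, then
`∂_v^β ∂_x^γ u` and `∂_x^γ ∂_v^β u` both exist at every point, are continuous, and agree. -/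
theorem mixed_derivatives_commute (d : ℕ) (hd : 1 ≤ d) (ϑ : ℝ) (hϑ : 0 < ϑ)
    (α : ℝ) (hα : 0 < α) (u : Pt d → ℝ) (hu : IsHolder ϑ α u)
    (γ β : Fin d → ℕ)
    (hlt : (1 + ϑ) * ((∑ i, γ i : ℕ) : ℝ) + ((∑ i, β i : ℕ) : ℝ) < α) :
    ExistsDxPow γ u ∧ ExistsDvPow β (dxPow γ u) ∧
    ExistsDvPow β u ∧ ExistsDxPow γ (dvPow β u) ∧
    Continuous (dvPow β (dxPow γ u)) ∧ Continuous (dxPow γ (dvPow β u)) ∧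
    dvPow β (dxPow γ u) = dxPow γ (dvPow β u) := by
  have r := reg_of_isHolder hϑ hα hu
  rw [← length_idxList, ← length_idxList] at hlt
  have hn1 : 0 ≤ (1 + ϑ) * ((idxList γ).length : ℝ) := by positivity
  have hn2 : 0 ≤ ((idxList β).length : ℝ) := by positivity
  obtain ⟨e1, r1⟩ := reg_dxList hϑ r (idxList γ) (by linarith)
  obtain ⟨e2, r2⟩ := reg_dvList r1 (idxList β) (by linarith)
  obtain ⟨e3, r3⟩ := reg_dvList r (idxList β) (by linarith)
  obtain ⟨e4, r4⟩ := reg_dxList hϑ r3 (idxList γ) (by linarith)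
  exact ⟨e1, e2, e3, e4, r2.continuous, r4.continuous, dvList_dxList_comm hϑ r _ _ hlt⟩

end
end
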